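/- arXiv:2409.14512 — 8 statements merged into one kernel-verified Lean document; each statement's English description precedes it below -/
import Mathlib

section
/- For every real numbers a, b ≥ 0 and c > 0 and every natural number k ≥ 1, the ascending factorials satisfy (c+a)_k (c+b)_k ≥ (c)_k (c+a+b)_k + (ab)^k. -/
open Polynomial

/-- For reals `a, b ≥ 0`, `c > 0` and `k ≥ 1`, the ascending factorials satisfy
`(c+a)_k (c+b)_k ≥ (c)_k (c+a+b)_k + (ab)^k`. -/
theorem ascFactorial_product_lower_bound (a b c : ℝ) (ha : 0 ≤ a) (hb : 0 ≤ b)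
    (hc : 0 < c) (k : ℕ) (hk : 1 ≤ k) :
    (ascPochhammer ℝ k).eval (c + a) * (ascPochhammer ℝ k).eval (c + b) ≥
      (ascPochhammer ℝ k).eval c * (ascPochhammer ℝ k).eval (c + a + b) + (a * b) ^ k := by
  induction k, hk using Nat.le_induction with
  | base =>
    simp only [ascPochhammer_one, eval_X, pow_one]
    apply le_of_eq
    ring
  | succ n hn ih =>
    simp only [ascPochhammer_succ_eval, pow_succ]
    have hX : 0 < (ascPochhammer ℝ n).eval c := ascPochhammer_pos n c hc
    have hY : 0 < (ascPochhammer ℝ n).eval (c + a + b) :=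
      ascPochhammer_pos n _ (by positivity)
    set A := (ascPochhammer ℝ n).eval (c + a)
    set B := (ascPochhammer ℝ n).eval (c + b)
    set X := (ascPochhammer ℝ n).eval c
    set Y := (ascPochhammer ℝ n).eval (c + a + b)
    have hab : 0 ≤ a * b := mul_nonneg ha hb
    have hp : 0 ≤ (a * b) ^ n := pow_nonneg hab n
    have hx : 0 ≤ (c + n) * (c + a + b + n) := by positivity
    have h1 : (X * Y + (a * b) ^ n) * ((c + n) * (c + a + b + n) + a * b)
        ≤ (A * B) * ((c + n) * (c + a + b + n) + a * b) :=
      mul_le_mul_of_nonneg_right ih (by positivity)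
    have h2 : 0 ≤ X * Y * (a * b) := by positivity
    have h3 := mul_nonneg hp hx
    have h4 : A * (c + a + n) * (B * (c + b + n))
        = (A * B) * ((c + n) * (c + a + b + n) + a * b) := by ring
    have h5 : (X * Y + (a * b) ^ n) * ((c + n) * (c + a + b + n) + a * b)
        = X * (c + n) * (Y * (c + a + b + n)) + (a * b) ^ n * (a * b)
          + X * Y * (a * b) + (a * b) ^ n * ((c + n) * (c + a + b + n)) := by ring
    rw [ge_iff_le, h4]
    linarith
end

section
/- Let m ≥ 1 be an integer, let a, b ≥ 0 be real numbers, and let c > (m−1)/2 be real. Let κ = (k₁, …, k_m) be a nonincreasing tuple of nonnegative integers with k₁ + ⋯ + k_m ≥ 1. Then ∏_{j=1}^m (c + a − (j−1)/2)_{k_j} · ∏_{j=1}^m (c + b − (j−1)/2)_{k_j} ≥ ∏_{j=1}^m (c − (j−1)/2)_{k_j} · ∏_{j=1}^m (c + a + b − (j−1)/2)_{k_j} + (ab)^{k₁+⋯+k_m}. In other words, the partitional rising factorials satisfy (c+a)_κ (c+b)_κ ≥ (c)_κ (c+a+b)_κ + (ab)^{|κ|} for every nonzero partition κ. -/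
open Polynomial

theorem ascP_eval_prod (n : ℕ) (x : ℝ) :
    (ascPochhammer ℝ n).eval x = ∏ i ∈ Finset.range n, (x + i) := by
  induction n with
  | zero => simp
  | succ n ih => rw [ascPochhammer_succ_eval, ih, Finset.prod_range_succ]

/-- For a nonzero partition `κ = (k₁, …, k_m)` (nonincreasing tuple of nonnegative
integers with `|κ| ≥ 1`), reals `a, b ≥ 0` and `c > (m−1)/2`, the partitional rising
factorials satisfy `(c+a)_κ (c+b)_κ ≥ (c)_κ (c+a+b)_κ + (ab)^{|κ|}`. -/
theorem partitional_ascFactorial_lower_bound (m : ℕ) (hm : 1 ≤ m)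
    (a b c : ℝ) (ha : 0 ≤ a) (hb : 0 ≤ b) (hc : (m - 1 : ℝ) / 2 < c)
    (k : Fin m → ℕ) (hmono : ∀ i j : Fin m, i ≤ j → k j ≤ k i)
    (hsum : 1 ≤ ∑ j, k j) :
    (∏ j : Fin m, (ascPochhammer ℝ (k j)).eval (c + a - (j : ℝ) / 2)) *
      (∏ j : Fin m, (ascPochhammer ℝ (k j)).eval (c + b - (j : ℝ) / 2)) ≥
    (∏ j : Fin m, (ascPochhammer ℝ (k j)).eval (c - (j : ℝ) / 2)) *
      (∏ j : Fin m, (ascPochhammer ℝ (k j)).eval (c + a + b - (j : ℝ) / 2)) +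
      (a * b) ^ (∑ j, k j) := by
  simp only [ascP_eval_prod, Finset.prod_sigma', ← Finset.prod_mul_distrib]
  set S : Finset (Σ _ : Fin m, ℕ) := Finset.univ.sigma fun j => Finset.range (k j) with hS
  have hcard : ∑ j, k j = S.card := by simp [hS]
  rw [hcard] at hsum ⊢
  rw [← Finset.prod_const]
  obtain ⟨i, hi⟩ := Finset.card_pos.mp hsum
  have hab : 0 ≤ a * b := mul_nonneg ha hb
  have hpos : ∀ p : (Σ _ : Fin m, ℕ), 0 ≤ c - (p.1 : ℝ) / 2 + p.2 := by
    intro p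
    have h1 : ((p.1 : ℕ) : ℝ) + 1 ≤ m := by exact_mod_cast p.1.2
    have h2 : (0 : ℝ) ≤ p.2 := Nat.cast_nonneg _
    linarith
  have hg : ∀ p : (Σ _ : Fin m, ℕ),
      0 ≤ (c - (p.1 : ℝ) / 2 + p.2) * (c + a + b - (p.1 : ℝ) / 2 + p.2) := by
    intro p
    have := hpos p
    exact mul_nonneg this (by linarith)
  have key : ∀ p : (Σ _ : Fin m, ℕ),
      (c + a - (p.1 : ℝ) / 2 + p.2) * (c + b - (p.1 : ℝ) / 2 + p.2) =
      (c - (p.1 : ℝ) / 2 + p.2) * (c + a + b - (p.1 : ℝ) / 2 + p.2) + a * b := by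
    intro p
    ring
  refine Finset.prod_add_prod_le hi (key i).ge ?_ ?_ ?_ ?_
  · intro p _ _
    linarith [key p]
  · intro p _ _
    linarith [key p, hg p]
  · intro p _
    exact hg p
  · intro p _
    exact hab
end

section
/- Let A be a real symmetric positive definite matrix of size (p₁+p₂)×(p₁+p₂) partitioned into blocks A = [[A₁₁, A₁₂],[A₂₁, A₂₂]] with A₁₁ of size p₁×p₁, A₂₂ of size p₂×p₂, and A₂₁ = A₁₂ᵀ. Let P = A₁₁^{−1/2} A₁₂ A₂₂^{−1/2}. Then the matrix I_{p₁} − P Pᵀ is symmetric positive definite; in particular every eigenvalue of P Pᵀ lies in [0, 1). -/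
open Matrix

/-- For a symmetric positive definite block matrix `A = [[A₁₁, A₁₂],[A₁₂ᵀ, A₂₂]]`,
with `S₁ = A₁₁^{1/2}` and `S₂ = A₂₂^{1/2}` the symmetric positive definite square
roots of the diagonal blocks, and `P = A₁₁^{−1/2} A₁₂ A₂₂^{−1/2}`, the matrix
`I − P Pᵀ` is symmetric positive definite; in particular every eigenvalue of
`P Pᵀ` lies in `[0, 1)`. -/
theorem one_sub_P_Pt_posDef (p₁ p₂ : ℕ)
    (A₁₁ : Matrix (Fin p₁) (Fin p₁) ℝ) (A₁₂ : Matrix (Fin p₁) (Fin p₂) ℝ)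
    (A₂₂ : Matrix (Fin p₂) (Fin p₂) ℝ)
    (hA : (Matrix.fromBlocks A₁₁ A₁₂ A₁₂ᵀ A₂₂).PosDef)
    (S₁ : Matrix (Fin p₁) (Fin p₁) ℝ) (hS₁ : S₁.PosDef) (hS₁sq : S₁ * S₁ = A₁₁)
    (S₂ : Matrix (Fin p₂) (Fin p₂) ℝ) (hS₂ : S₂.PosDef) (hS₂sq : S₂ * S₂ = A₂₂) :
    (1 - (S₁⁻¹ * A₁₂ * S₂⁻¹) * (S₁⁻¹ * A₁₂ * S₂⁻¹)ᵀ).PosDef ∧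
      ∀ μ : ℝ,
        Module.End.HasEigenvalue
          (Matrix.toLin' ((S₁⁻¹ * A₁₂ * S₂⁻¹) * (S₁⁻¹ * A₁₂ * S₂⁻¹)ᵀ)) μ →
        0 ≤ μ ∧ μ < 1 := by
  have t₁ : S₁⁻¹ᵀ = S₁⁻¹ := by
    have := hS₁.inv.isHermitian
    rwa [IsHermitian, conjTranspose_eq_transpose_of_trivial] at this
  have t₂ : S₂⁻¹ᵀ = S₂⁻¹ := by
    have := hS₂.inv.isHermitian
    rwa [IsHermitian, conjTranspose_eq_transpose_of_trivial] at this
  have d₁ : IsUnit S₁.det := (isUnit_iff_isUnit_det _).1 hS₁.isUnit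
  have d₂ : IsUnit S₂.det := (isUnit_iff_isUnit_det _).1 hS₂.isUnit
  have e₁ : S₁⁻¹ * A₁₁ * S₁⁻¹ = 1 := by
    rw [← hS₁sq, nonsing_inv_mul_cancel_left _ _ d₁, mul_nonsing_inv _ d₁]
  have e₂ : S₂⁻¹ * A₂₂ * S₂⁻¹ = 1 := by
    rw [← hS₂sq, nonsing_inv_mul_cancel_left _ _ d₂, mul_nonsing_inv _ d₂]
  generalize hP : S₁⁻¹ * A₁₂ * S₂⁻¹ = P
  have hPt : S₂⁻¹ * A₁₂ᵀ * S₁⁻¹ = Pᵀ := by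
    rw [← hP, transpose_mul, transpose_mul, t₁, t₂, Matrix.mul_assoc]
  have key : (1 - P * Pᵀ).PosDef := by
    have inj : Function.Injective (fromRows S₁⁻¹ (-(S₂⁻¹ * Pᵀ))).mulVec := by
      intro x y hxy
      simp only [fromRows_mulVec] at hxy
      have h1 : S₁⁻¹ *ᵥ x = S₁⁻¹ *ᵥ y := by
        funext i
        exact congrFun hxy (Sum.inl i)
      have h2 := congrArg (S₁ *ᵥ ·) h1
      simpa [mulVec_mulVec, mul_nonsing_inv _ d₁] using h2
    have h := hA.conjTranspose_mul_mul_same inj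
    convert h using 1
    rw [conjTranspose_eq_transpose_of_trivial, transpose_fromRows, fromCols_mul_fromBlocks,
      fromCols_mul_fromRows, transpose_neg, transpose_mul, transpose_transpose, t₁, t₂]
    have f1 : S₁⁻¹ * A₁₂ * (S₂⁻¹ * Pᵀ) = P * Pᵀ := by rw [← Matrix.mul_assoc, hP]
    have f2 : P * S₂⁻¹ * A₁₂ᵀ * S₁⁻¹ = P * Pᵀ := by rw [← hPt]; simp only [Matrix.mul_assoc]
    have f3 : P * S₂⁻¹ * A₂₂ * (S₂⁻¹ * Pᵀ) = P * Pᵀ := by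
      calc _ = P * (S₂⁻¹ * A₂₂ * S₂⁻¹) * Pᵀ := by simp only [Matrix.mul_assoc]
        _ = _ := by rw [e₂, Matrix.mul_one]
    simp only [Matrix.add_mul, Matrix.neg_mul, Matrix.mul_neg, f1, f2, f3, e₁]
    abel
  refine ⟨key, fun μ hμ => ?_⟩
  obtain ⟨v, hv⟩ := hμ.exists_hasEigenvector
  have hv0 : v ≠ 0 := hv.2
  have hvm : (P * Pᵀ) *ᵥ v = μ • v := by simpa using hv.apply_eq_smul
  have a1 := key.dotProduct_mulVec_pos hv0
  have a2 := (posSemidef_self_mul_conjTranspose P).dotProduct_mulVec_nonneg v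
  have a3 : 0 < v ⬝ᵥ v := by
    simpa using (PosDef.one (n := Fin p₁) (R := ℝ)).dotProduct_mulVec_pos hv0
  rw [conjTranspose_eq_transpose_of_trivial, hvm] at a2
  rw [sub_mulVec, hvm] at a1
  simp only [star_trivial, one_mulVec, dotProduct_sub, dotProduct_smul, smul_eq_mul] at a1 a2
  constructor <;> nlinarith
end

section
/- For every real numbers a, b ≥ 0, c > 0, and x with 0 ≤ x < 1, one has ∑_{k=0}^∞ ((−a)_k (−b)_k / ((c)_k · k!)) x^k ≥ 1 + (1−x)^{c+a+b} · (∑_{k=0}^∞ ((ab)^k / ((c)_k · k!)) x^k − 1), and the right-hand side is at least 1; in particular ₂F₁(−a, −b; c; x) ≥ 1 + (1−x)^{c+a+b}(₀F₁(c; abx) − 1) ≥ 1. -/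
namespace GaussAux

/-- Coefficients of the Gauss hypergeometric series. -/
noncomputable def hyp (a b c : ℝ) (k : ℕ) : ℝ :=
  (ascPochhammer ℝ k).eval a * (ascPochhammer ℝ k).eval b /
    ((ascPochhammer ℝ k).eval c * (k.factorial : ℝ))

/-- Coefficients of `(1-x)^(-s)`. -/
noncomputable def bin (s : ℝ) (k : ℕ) : ℝ := (ascPochhammer ℝ k).eval s / (k.factorial : ℝ)

lemma hyp_rec (a b c : ℝ) (hc : 0 < c) (k : ℕ) :
    hyp a b c (k + 1) * ((c + k) * (k + 1)) = hyp a b c k * ((a + k) * (b + k)) := by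
  unfold hyp
  have h1 := ascPochhammer_pos k c hc
  have h2 : (k.factorial : ℝ) ≠ 0 := by positivity
  have h3 : c + k ≠ 0 := by positivity
  simp only [ascPochhammer_succ_eval, Nat.factorial_succ, Nat.cast_mul, Nat.cast_succ]
  have h4 : (k : ℝ) + 1 ≠ 0 := by positivity
  field_simp

lemma bin_rec (s : ℝ) (k : ℕ) : bin s (k + 1) * (k + 1) = bin s k * (s + k) := by
  unfold bin
  have h2 : (k.factorial : ℝ) ≠ 0 := by positivity
  simp only [ascPochhammer_succ_eval, Nat.factorial_succ, Nat.cast_mul, Nat.cast_succ]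
  have h4 : (k : ℝ) + 1 ≠ 0 := by positivity
  field_simp

open PowerSeries in
lemma coeff_ode (A B c : ℝ) (f : PowerSeries ℝ) (n : ℕ) :
    coeff n (X * (1 - X) * d⁄dX ℝ (d⁄dX ℝ f) + (C c - C (A + B + 1) * X) * d⁄dX ℝ f
      - C (A * B) * f) =
    coeff (n + 1) f * ((c + n) * (n + 1)) - coeff n f * ((A + n) * (B + n)) := by
  have e : X * (1 - X) * d⁄dX ℝ (d⁄dX ℝ f) + (C c - C (A + B + 1) * X) * d⁄dX ℝ f
      - C (A * B) * f = X * d⁄dX ℝ (d⁄dX ℝ f) - X * (X * d⁄dX ℝ (d⁄dX ℝ f))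
      + C c * d⁄dX ℝ f - C (A + B + 1) * (X * d⁄dX ℝ f) - C (A * B) * f := by ring
  rw [e]
  rcases n with _ | _ | n
  · simp only [map_sub, LinearMap.map_add, coeff_C_mul, coeff_zero_X_mul, coeff_derivative]
    push_cast
    ring
  · simp only [map_sub, LinearMap.map_add, coeff_C_mul, coeff_succ_X_mul, coeff_derivative,
      coeff_zero_X_mul]
    push_cast
    ring
  · simp only [map_sub, LinearMap.map_add, coeff_C_mul, coeff_succ_X_mul, coeff_derivative]
    push_cast
    ring

open PowerSeries in
lemma euler_coeff (a b c : ℝ) (hc : 0 < c) (n : ℕ) :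
    ∑ kl ∈ Finset.HasAntidiagonal.antidiagonal n, hyp (-a) (-b) c kl.1 * bin (c + a + b) kl.2 =
      hyp (c + a) (c + b) c n := by
  set u : PowerSeries ℝ := PowerSeries.mk (hyp (-a) (-b) c) with hu
  set p : PowerSeries ℝ := PowerSeries.mk (bin (c + a + b)) with hp
  have h1 : X * (1 - X) * d⁄dX ℝ (d⁄dX ℝ u) + (C c - C (-a + -b + 1) * X) * d⁄dX ℝ u
      - C (-a * -b) * u = 0 := by
    ext n
    rw [coeff_ode, hu, coeff_mk, coeff_mk, hyp_rec _ _ _ hc]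
    simp
  have h2 : (1 - X) * d⁄dX ℝ p = C (c + a + b) * p := by
    have e : (1 - X) * d⁄dX ℝ p = d⁄dX ℝ p - X * d⁄dX ℝ p := by ring
    rw [e]
    ext n
    have := bin_rec (c + a + b) n
    rcases n with _ | n
    · simp only [map_sub, coeff_derivative, coeff_zero_X_mul, coeff_C_mul, hp, coeff_mk]
      linear_combination this
    · simp only [map_sub, coeff_derivative, coeff_succ_X_mul, coeff_C_mul, hp, coeff_mk]
      push_cast at this ⊢
      linear_combination this
  have h3 : (1 - X) * d⁄dX ℝ (d⁄dX ℝ p) = (C (c + a + b) + 1) * d⁄dX ℝ p := by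
    have := congrArg (d⁄dX ℝ) h2
    simp only [Derivation.leibniz, smul_eq_mul, map_sub, derivative_X, derivative_one,
      derivative_C] at this
    linear_combination this
  have d1 : d⁄dX ℝ (u * p) = u * d⁄dX ℝ p + p * d⁄dX ℝ u := by
    simp [Derivation.leibniz]
  have d2 : d⁄dX ℝ (d⁄dX ℝ (u * p)) = u * d⁄dX ℝ (d⁄dX ℝ p) + 2 * (d⁄dX ℝ u * d⁄dX ℝ p)
      + p * d⁄dX ℝ (d⁄dX ℝ u) := by
    rw [d1]
    simp only [map_add, Derivation.leibniz, smul_eq_mul]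
    ring
  have h4 : X * (1 - X) * d⁄dX ℝ (d⁄dX ℝ (u * p))
      + (C c - C ((c + a) + (c + b) + 1) * X) * d⁄dX ℝ (u * p)
      - C ((c + a) * (c + b)) * (u * p) = 0 := by
    have hX : (1 - X : PowerSeries ℝ) ≠ 0 := by
      intro h
      have := congrArg (coeff 0) h
      simp at this
    apply mul_left_cancel₀ hX
    rw [d2, d1]
    simp only [map_add, map_mul, map_neg, map_one] at h1 h2 h3 ⊢
    generalize d⁄dX ℝ (d⁄dX ℝ u) = u2 at *
    generalize d⁄dX ℝ (d⁄dX ℝ p) = p2 at *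
    generalize d⁄dX ℝ u = u1 at *
    generalize d⁄dX ℝ p = p1 at *
    generalize (C c : PowerSeries ℝ) = c at *
    generalize (C a : PowerSeries ℝ) = a at *
    generalize (C b : PowerSeries ℝ) = b at *
    linear_combination (1 - X) * p * h1 + X * (1 - X) * u * h3
      + (X * (c + a + b + 1) * u + 2 * X * (1 - X) * u1
        + (c - (c + a + (c + b) + 1) * X) * u) * h2
  have key : ∀ n, coeff n (u * p) = hyp (c + a) (c + b) c n := by
    intro n
    induction n with
    | zero => simp [coeff_mul, hu, hp, hyp, bin]
    | succ n ih =>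
      have := congrArg (coeff n) h4
      rw [coeff_ode, ih, map_zero, ← hyp_rec _ _ _ hc, ← sub_mul] at this
      have hne : (c + n) * ((n : ℝ) + 1) ≠ 0 := by positivity
      have := (mul_eq_zero.mp this).resolve_right hne
      linarith
  rw [← key n, coeff_mul]
  simp [hu, hp]

lemma bin_hasSum (s x : ℝ) (hx0 : 0 ≤ x) (hx1 : x < 1) :
    HasSum (fun k => bin s k * x ^ k) (1 / (1 - x) ^ s) := by
  have h := (Real.one_div_one_sub_rpow_hasFPowerSeriesOnBall_zero s).hasSum (y := x) (by
    simp [Real.norm_eq_abs, abs_of_nonneg hx0, enorm_eq_nnnorm, ← NNReal.coe_lt_one, hx1])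
  have e : ∀ k, bin s k = Ring.choose (s + k - 1) k := by
    intro k
    rw [← Ring.multichoose_eq]
    have := Ring.factorial_nsmul_multichoose_eq_ascPochhammer s k
    rw [Polynomial.ascPochhammer_smeval_eq_eval, nsmul_eq_mul] at this
    unfold bin
    rw [← this]
    have h2 : (k.factorial : ℝ) ≠ 0 := by positivity
    field_simp
  simp only [e]
  simpa [FormalMultilinearSeries.ofScalars, mul_comm] using h

open Filter Topology in
lemma hyp_summable (a b c x : ℝ) (hc : 0 < c) (hx0 : 0 ≤ x) (hx1 : x < 1) :
    Summable (fun k => hyp a b c k * x ^ k) := by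
  have lim : ∀ a d : ℝ, Tendsto (fun k : ℕ => (a + k) / (d + k)) atTop (𝓝 1) := by
    intro a d
    simpa using tendsto_add_mul_div_add_mul_atTop_nhds a d (1 : ℝ) (one_ne_zero)
  have l2 : Tendsto (fun k : ℕ => |(a + k) / (c + k) * ((b + k) / (1 + k)) * x|) atTop
      (𝓝 x) := by
    have := (((lim a c).mul (lim b 1)).mul_const x).abs
    simpa [abs_of_nonneg hx0] using this
  obtain ⟨r, hr1, hr2⟩ := exists_between hx1
  refine summable_of_ratio_norm_eventually_le hr2 ?_
  filter_upwards [l2.eventually_le_const hr1] with k hk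
  have hr := hyp_rec a b c hc k
  have h1 : c + (k : ℝ) ≠ 0 := by positivity
  have h2 : 1 + (k : ℝ) ≠ 0 := by positivity
  have : hyp a b c (k + 1) * x ^ (k + 1) =
      ((a + k) / (c + k) * ((b + k) / (1 + k)) * x) * (hyp a b c k * x ^ k) := by
    field_simp
    rw [pow_succ]
    linear_combination x ^ k * x * hr
  rw [this, norm_mul]
  exact mul_le_mul_of_nonneg_right hk (norm_nonneg _)

lemma prod_ineq (a b c : ℝ) (ha : 0 ≤ a) (hb : 0 ≤ b) (hc : 0 < c) (k : ℕ) :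
    (a * b) ^ (k + 1) + (ascPochhammer ℝ (k + 1)).eval c
      * (ascPochhammer ℝ (k + 1)).eval (c + a + b) ≤
    (ascPochhammer ℝ (k + 1)).eval (c + a) * (ascPochhammer ℝ (k + 1)).eval (c + b) := by
  induction k with
  | zero => simp; nlinarith
  | succ k ih =>
    have h1 := (ascPochhammer_pos (k + 1) c hc).le
    have h2 := (ascPochhammer_pos (k + 1) (c + a + b) (by positivity)).le
    rw [ascPochhammer_succ_eval _ c, ascPochhammer_succ_eval _ (c + a + b),
      ascPochhammer_succ_eval _ (c + a), ascPochhammer_succ_eval _ (c + b)]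
    generalize (ascPochhammer ℝ (k + 1)).eval c = p at *
    generalize (ascPochhammer ℝ (k + 1)).eval (c + a + b) = q at *
    generalize (ascPochhammer ℝ (k + 1)).eval (c + a) = r at *
    generalize (ascPochhammer ℝ (k + 1)).eval (c + b) = t at *
    have hm : (0 : ℝ) ≤ ((k + 1 : ℕ) : ℝ) := Nat.cast_nonneg _
    generalize ((k + 1 : ℕ) : ℝ) = m at *
    have hab : 0 ≤ a * b := mul_nonneg ha hb
    rw [pow_succ]
    have hE : 0 ≤ (a * b) ^ (k + 1) := by positivity
    generalize (a * b) ^ (k + 1) = E at *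
    have hf : 0 ≤ (c + m) * (c + a + b + m) := by positivity
    have h3 := mul_le_mul_of_nonneg_right ih (add_nonneg hf hab)
    have h4 : 0 ≤ p * q * (a * b) := by positivity
    have h5 := mul_nonneg hE hf
    linarith

end GaussAux

open Polynomial

/-- Quantitative lower bound for the Gauss hypergeometric series:
for `a, b ≥ 0`, `c > 0` and `0 ≤ x < 1`,
`₂F₁(−a, −b; c; x) ≥ 1 + (1−x)^{c+a+b} (₀F₁(c; abx) − 1) ≥ 1`. -/
theorem gauss2F1_lower_bound (a b c x : ℝ) (ha : 0 ≤ a) (hb : 0 ≤ b)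
    (hc : 0 < c) (hx0 : 0 ≤ x) (hx1 : x < 1) :
    (∑' k : ℕ, (ascPochhammer ℝ k).eval (-a) * (ascPochhammer ℝ k).eval (-b) /
        ((ascPochhammer ℝ k).eval c * (k.factorial : ℝ)) * x ^ k) ≥
      1 + (1 - x) ^ (c + a + b) *
        ((∑' k : ℕ, (a * b) ^ k /
            ((ascPochhammer ℝ k).eval c * (k.factorial : ℝ)) * x ^ k) - 1) ∧
    1 + (1 - x) ^ (c + a + b) *
        ((∑' k : ℕ, (a * b) ^ k /
            ((ascPochhammer ℝ k).eval c * (k.factorial : ℝ)) * x ^ k) - 1) ≥ 1 := by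
  change (∑' k : ℕ, GaussAux.hyp (-a) (-b) c k * x ^ k) ≥ _ ∧ _
  set v : ℕ → ℝ := fun k => (a * b) ^ k /
            ((ascPochhammer ℝ k).eval c * (k.factorial : ℝ)) * x ^ k with hv
  have hab : 0 ≤ a * b := mul_nonneg ha hb
  have hpc : ∀ k, 0 < (ascPochhammer ℝ k).eval c := fun k => ascPochhammer_pos k c hc
  have hv0 : ∀ k, 0 ≤ v k := fun k => by
    have := hpc k
    simp only [hv]
    positivity
  have hW : 0 < (1 - x) ^ (c + a + b) := Real.rpow_pos_of_pos (by linarith) _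
  have hU := GaussAux.hyp_summable (-a) (-b) c x hc hx0 hx1
  have hY := GaussAux.hyp_summable (c + a) (c + b) c x hc hx0 hx1
  have hP := GaussAux.bin_hasSum (c + a + b) x hx0 hx1
  have hprod := tsum_mul_tsum_eq_tsum_sum_antidiagonal_of_summable_norm hU.norm hP.summable.norm
  have hterm : ∀ n, ∑ kl ∈ Finset.HasAntidiagonal.antidiagonal n, GaussAux.hyp (-a) (-b) c kl.1 * x ^ kl.1 *
      (GaussAux.bin (c + a + b) kl.2 * x ^ kl.2) = GaussAux.hyp (c + a) (c + b) c n * x ^ n := by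
    intro n
    rw [← GaussAux.euler_coeff a b c hc n, Finset.sum_mul]
    refine Finset.sum_congr rfl fun kl h => ?_
    rw [← Finset.HasAntidiagonal.mem_antidiagonal.mp h, pow_add]
    ring
  simp only [hterm] at hprod
  rw [hP.tsum_eq] at hprod
  have hle : ∀ k, v k + GaussAux.bin (c + a + b) k * x ^ k ≤
      GaussAux.hyp (c + a) (c + b) c k * x ^ k + if k = 0 then 1 else 0 := by
    intro k
    rcases k with _ | k
    · simp [hv, GaussAux.bin, GaussAux.hyp]
    · have h := GaussAux.prod_ineq a b c ha hb hc k
      have h1 := hpc (k + 1)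
      simp only [hv, GaussAux.bin, GaussAux.hyp, Nat.succ_ne_zero, if_false, add_zero]
      rw [← add_mul]
      refine mul_le_mul_of_nonneg_right ?_ (by positivity)
      have h2 : (0 : ℝ) < ((k + 1).factorial : ℝ) := by positivity
      rw [le_div_iff₀ (by positivity)]
      refine le_trans (le_of_eq ?_) h
      field_simp
  have hI : HasSum (fun k : ℕ => if k = 0 then (1 : ℝ) else 0) 1 := hasSum_ite_eq 0 1
  have hbin0 : ∀ k, 0 ≤ GaussAux.bin (c + a + b) k * x ^ k := fun k => by
    have := ascPochhammer_pos k (c + a + b) (by positivity)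
    unfold GaussAux.bin
    positivity
  have hV : Summable v := by
    refine Summable.of_nonneg_of_le hv0 (fun k => ?_) (hY.add hI.summable)
    linarith [hle k, hbin0 k]
  have hmain := (hV.add hP.summable).tsum_le_tsum hle (hY.add hI.summable)
  rw [hV.tsum_add hP.summable, hY.tsum_add hI.summable, hP.tsum_eq, hI.tsum_eq, ← hprod] at hmain
  have hV1 : 1 ≤ ∑' k, v k := by
    have := hV.le_tsum 0 (fun j _ => hv0 j)
    simpa [hv] using this
  constructor
  · generalize (1 - x) ^ (c + a + b) = W at *
    have := mul_le_mul_of_nonneg_left hmain hW.le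
    field_simp at this
    linarith
  · have := mul_nonneg hW.le (sub_nonneg.mpr hV1)
    linarith
end

section
/- Let α > 1, and let a, b, c be real numbers with a > 0 and ab − c² > 0 (so that the 2×2 matrix [[a,c],[c,b]] is symmetric positive definite). Then for all real ν₁ > −α/2 and ν₂ > −α/2, the Lebesgue integral over D = {(x,y,z) ∈ ℝ³ : x > 0, y > 0, xy − z² > 0} satisfies ∫_D x^{ν₁} y^{ν₂} (xy − z²)^{(α−3)/2} exp(−(a x + b y + 2 c z)) d(x,y,z) = √π · Γ((α−1)/2) · (Γ(α/2 + ν₁) Γ(α/2 + ν₂) / Γ(α/2)) · b^{ν₁} a^{ν₂} (ab − c²)^{−(α/2 + ν₁ + ν₂)} · ∑_{k=0}^∞ ((−ν₁)_k (−ν₂)_k / ((α/2)_k · k!)) (c²/(ab))^k. (This is the p₁ = p₂ = 1 case of the Wishart product-of-minors moment formula E(X₁₁^{ν₁} X₂₂^{ν₂}) = E(X₁₁^{ν₁}) E(X₂₂^{ν₂}) ₂F₁(−ν₁, −ν₂; α/2; ρ²).) -/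
open MeasureTheory Polynomial Real

lemma wpm_summable_of_ratio (u r : ℕ → ℝ) (w : ℝ) (hw : |w| < 1)
    (hu : ∀ k, u (k + 1) = r k * u k) (hr : Filter.Tendsto r Filter.atTop (nhds w)) :
    Summable fun k => ‖u k‖ := by
  obtain ⟨q, hq1, hq2⟩ := exists_between hw
  have h1 : ∀ᶠ k in Filter.atTop, |r k| < q := (hr.abs).eventually (gt_mem_nhds hq1)
  refine summable_of_ratio_norm_eventually_le (r := q) hq2 ?_
  filter_upwards [h1] with k hk
  rw [hu k]
  simp only [norm_mul, Real.norm_eq_abs, abs_abs]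
  exact mul_le_mul_of_nonneg_right hk.le (abs_nonneg _)

lemma wpm_tendsto_ratio (a : ℝ) (c : ℝ) (hc : 0 < c) :
    Filter.Tendsto (fun k : ℕ => (a + k) / (c + k)) Filter.atTop (nhds 1) := by
  have h : Filter.Tendsto (fun k : ℕ => 1 + (a - c) / (c + k)) Filter.atTop (nhds (1 + 0)) := by
    refine tendsto_const_nhds.add (Filter.Tendsto.div_atTop tendsto_const_nhds ?_)
    exact Filter.tendsto_atTop_add_const_left _ _ tendsto_natCast_atTop_atTop
  rw [add_zero] at h
  refine h.congr fun k => ?_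
  have : c + (k : ℝ) ≠ 0 := by positivity
  field_simp
  ring

/-- hypergeometric coefficients -/
noncomputable def wpmT (a b c : ℝ) (k : ℕ) : ℝ :=
  (ascPochhammer ℝ k).eval a * (ascPochhammer ℝ k).eval b /
    ((ascPochhammer ℝ k).eval c * (k.factorial : ℝ))

noncomputable def wpmS (e : ℝ) (k : ℕ) : ℝ := (ascPochhammer ℝ k).eval e / (k.factorial : ℝ)

lemma wpmT_succ (a b c : ℝ) (hc : 0 < c) (k : ℕ) :
    wpmT a b c (k + 1) = (a + k) * (b + k) / ((c + k) * (1 + k)) * wpmT a b c k := by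
  have h1 : (ascPochhammer ℝ k).eval c ≠ 0 := (ascPochhammer_pos k c hc).ne'
  have h2 : c + (k : ℝ) ≠ 0 := by positivity
  have h3 : (k.factorial : ℝ) ≠ 0 := by positivity
  have h4 : (1 : ℝ) + k ≠ 0 := by positivity
  simp only [wpmT, ascPochhammer_succ_eval, Nat.factorial_succ]
  push_cast
  rw [add_comm (k : ℝ) 1]
  field_simp

lemma wpmS_succ (e : ℝ) (k : ℕ) : wpmS e (k + 1) = (e + k) / (1 + k) * wpmS e k := by
  have h3 : (k.factorial : ℝ) ≠ 0 := by positivity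
  have h4 : (1 : ℝ) + k ≠ 0 := by positivity
  simp only [wpmS, ascPochhammer_succ_eval, Nat.factorial_succ]
  push_cast
  rw [add_comm (k : ℝ) 1]
  field_simp

lemma wpmT_summable (a b c w : ℝ) (hc : 0 < c) (hw : |w| < 1) :
    Summable fun k => ‖wpmT a b c k * w ^ k‖ := by
  refine wpm_summable_of_ratio _ (fun k => (a + k) / (c + k) * ((b + k) / (1 + k)) * w) w hw ?_ ?_
  · intro k
    have h2 : c + (k : ℝ) ≠ 0 := by positivity
    have h4 : (1 : ℝ) + k ≠ 0 := by positivity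
    rw [wpmT_succ a b c hc, pow_succ]
    field_simp
  · have := ((wpm_tendsto_ratio a c hc).mul (wpm_tendsto_ratio b 1 one_pos)).mul_const w
    simpa using this

lemma wpmS_summable (e w : ℝ) (hw : |w| < 1) :
    Summable fun k => ‖wpmS e k * w ^ k‖ := by
  refine wpm_summable_of_ratio _ (fun k => ((e + k) / (1 + k)) * w) w hw ?_ ?_
  · intro k
    rw [wpmS_succ, pow_succ]
    ring
  · have := (wpm_tendsto_ratio e 1 one_pos).mul_const w
    simpa using this

lemma wpmS_tsum (e w : ℝ) (hw : |w| < 1) :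
    ∑' k, wpmS e k * w ^ k = (1 - w) ^ (-e) := by
  have h := (Real.one_add_rpow_hasFPowerSeriesOnBall_zero (a := -e)).hasSum (y := -w)
    (by rw [← ENNReal.ofReal_one, Metric.eball_ofReal]; simpa using hw)
  have h2 := h.tsum_eq
  simp only [zero_add] at h2
  rw [sub_eq_add_neg, ← h2]
  congr 1
  ext k
  simp only [binomialSeries_apply, List.ofFn_const, List.prod_replicate, smul_eq_mul]
  rw [wpmS, Ring.choose_eq_smul, Polynomial.descPochhammer_smeval_eq_ascPochhammer,
    Polynomial.ascPochhammer_smeval_cast, Polynomial.ascPochhammer_smeval_eq_eval]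
  have : (ascPochhammer ℝ k).eval (-e - k + 1) = (-1) ^ k * (ascPochhammer ℝ k).eval e := by
    have h1 := ascPochhammer_eval_neg_eq_descPochhammer (r := -e) (k := k)
    rw [descPochhammer_eval_eq_ascPochhammer, neg_neg] at h1
    rw [h1, ← mul_assoc, ← mul_pow]; simp
  rw [this, neg_pow w k]
  have h5 : ((-1 : ℝ) ^ k) * (-1) ^ k = 1 := by rw [← mul_pow]; simp
  simp only [smul_eq_mul]
  linear_combination (-(Polynomial.eval e (ascPochhammer ℝ k) * (k.factorial : ℝ)⁻¹ * w ^ k)) * h5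

lemma wpm_saalschutz (a b c : ℝ) (hc : 0 < c) (n : ℕ) :
    ∑ k ∈ Finset.range (n + 1), wpmT a b c k * wpmS (c - a - b) (n - k) =
      wpmT (c - a) (c - b) c n := by
  induction n with
  | zero => simp [wpmT, wpmS]
  | succ n ih =>
    have hcn : c + (n : ℝ) ≠ 0 := by positivity
    have h4 : (1 : ℝ) + n ≠ 0 := by positivity
    rw [wpmT_succ _ _ _ hc, ← ih]
    have key : ∀ m ≤ n + 1,
        (1 + n) * (c + n) * ∑ k ∈ Finset.range m, wpmT a b c k * wpmS (c - a - b) (n + 1 - k)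
        - (c - a + n) * (c - b + n) *
          ∑ k ∈ Finset.range m, wpmT a b c k * wpmS (c - a - b) (n - k)
        = - (m * (c + m - 1) * wpmT a b c m * wpmS (c - a - b) (n + 1 - m)) := by
      intro m
      induction m with
      | zero => simp
      | succ m ihm =>
        intro hm
        have hm' : m ≤ n := by omega
        obtain ⟨d, rfl⟩ := Nat.exists_eq_add_of_le hm'
        have ihm := ihm (by omega)
        rw [Finset.sum_range_succ, Finset.sum_range_succ]
        have e1 : m + d + 1 - m = d + 1 := by omega
        have e2 : m + d - m = d := by omega
        have e3 : m + d + 1 - (m + 1) = d := by omega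
        rw [e1] at ihm
        rw [e1, e2, e3, wpmT_succ a b c hc m]
        rw [wpmS_succ] at ihm ⊢
        have h1 : c + (m : ℝ) ≠ 0 := by positivity
        have h2 : (1 : ℝ) + m ≠ 0 := by positivity
        have h3 : (1 : ℝ) + d ≠ 0 := by positivity
        push_cast at ihm ⊢
        have step : (1 + ((m : ℝ) + d)) * (c + (m + d)) *
              (wpmT a b c m * ((c - a - b + d) / (1 + d) * wpmS (c - a - b) d)) -
            (c - a + (m + d)) * (c - b + (m + d)) * (wpmT a b c m * wpmS (c - a - b) d) =
            -((m + 1) * (c + (m + 1) - 1) *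
              ((a + m) * (b + m) / ((c + m) * (1 + m)) * wpmT a b c m) * wpmS (c - a - b) d) +
            (m * (c + m - 1) * wpmT a b c m *
              ((c - a - b + d) / (1 + d) * wpmS (c - a - b) d)) := by
          have h5 : c + ((m : ℝ) + 1) - 1 = c + m := by ring
          rw [h5]
          field_simp
          ring
        linear_combination ihm + step
    have hk := key (n + 1) le_rfl
    rw [Finset.sum_range_succ _ (n + 1)]
    rw [wpmT_succ a b c hc n] at hk ⊢
    push_cast at hk
    simp only [Nat.sub_self] at hk ⊢
    have h5 : c + ((n : ℝ) + 1) - 1 = c + n := by ring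
    rw [h5] at hk
    have h6 : ((n : ℝ) + 1) * (c + n) * ((a + n) * (b + n) / ((c + n) * (1 + n)) * wpmT a b c n) =
        (a + n) * (b + n) * wpmT a b c n := by
      field_simp
      ring
    rw [h6] at hk
    field_simp
    linear_combination hk

lemma wpm_euler (a b c w : ℝ) (hc : 0 < c) (hw : |w| < 1) :
    ∑' k, wpmT (c - a) (c - b) c k * w ^ k =
      (1 - w) ^ (-(c - a - b)) * ∑' k, wpmT a b c k * w ^ k := by
  rw [← wpmS_tsum _ _ hw, mul_comm, tsum_mul_tsum_eq_tsum_sum_range_of_summable_norm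
    (wpmT_summable a b c w hc hw) (wpmS_summable _ w hw)]
  congr 1
  ext n
  rw [← wpm_saalschutz a b c hc, Finset.sum_mul]
  refine Finset.sum_congr rfl fun k hk => ?_
  have : k + (n - k) = n := by have := Finset.mem_range.1 hk; omega
  rw [mul_mul_mul_comm, ← pow_add, this]


lemma wpm_gamma (p r : ℝ) (hp : 0 < p) (hr : 0 < r) :
    ∫⁻ x in Set.Ioi (0 : ℝ), ENNReal.ofReal (x ^ (p - 1) * Real.exp (-(r * x))) =
      ENNReal.ofReal ((1 / r) ^ p * Real.Gamma p) := by
  have h := Real.integral_rpow_mul_exp_neg_mul_Ioi hp hr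
  rw [← h, ofReal_integral_eq_lintegral_ofReal]
  · by_contra hn
    have := integral_undef hn
    rw [h] at this
    have h2 : 0 < (1 / r) ^ p * Real.Gamma p := by
      have := Real.Gamma_pos_of_pos hp
      positivity
    exact h2.ne' this
  · refine ae_restrict_of_forall_mem measurableSet_Ioi fun x hx => ?_
    have : (0 : ℝ) < x := hx
    simp only [Pi.zero_apply]
    positivity

lemma wpm_beta (p q : ℝ) (hp : 0 < p) (hq : 0 < q) :
    ∫⁻ u in Set.Ioo (0 : ℝ) 1, ENNReal.ofReal (u ^ (p - 1) * (1 - u) ^ (q - 1)) =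
      ENNReal.ofReal (Real.Gamma p * Real.Gamma q / Real.Gamma (p + q)) := by
  have h := ProbabilityTheory.lintegral_betaPDF_eq_one hp hq
  have hb := ProbabilityTheory.beta_pos hp hq
  change _ = ENNReal.ofReal (ProbabilityTheory.beta p q)
  rw [ProbabilityTheory.lintegral_betaPDF] at h
  have h2 : ∀ x : ℝ, ENNReal.ofReal (1 / ProbabilityTheory.beta p q * x ^ (p - 1) *
      (1 - x) ^ (q - 1)) = ENNReal.ofReal (1 / ProbabilityTheory.beta p q) *
        ENNReal.ofReal (x ^ (p - 1) * (1 - x) ^ (q - 1)) := by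
    intro x
    rw [mul_assoc, ENNReal.ofReal_mul (by positivity)]
  simp_rw [h2] at h
  rw [lintegral_const_mul _ (by fun_prop)] at h
  calc _ = ENNReal.ofReal (ProbabilityTheory.beta p q) *
        (ENNReal.ofReal (1 / ProbabilityTheory.beta p q) * _) := by
        rw [← mul_assoc, ← ENNReal.ofReal_mul hb.le, mul_one_div_cancel hb.ne',
          ENNReal.ofReal_one, one_mul]
    _ = _ := by rw [h, mul_one]

lemma wpm_half (q R : ℝ) (hq : 0 < q) (hR : 0 < R) (k : ℕ) :
    ∫⁻ z in Set.Ioo (0 : ℝ) (√R), ENNReal.ofReal (2 * z ^ (2 * k) * (R - z ^ 2) ^ (q - 1)) =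
      ENNReal.ofReal (R ^ ((k : ℝ) + q - 1 / 2) *
        (Real.Gamma (k + 1 / 2) * Real.Gamma q / Real.Gamma (k + 1 / 2 + q))) := by
  have hs : (fun z : ℝ => z ^ 2 / R) '' Set.Ioo (0 : ℝ) (√R) = Set.Ioo 0 1 := by
    ext u
    constructor
    · rintro ⟨z, ⟨h0, h1⟩, rfl⟩
      have h2 : z ^ 2 < R := (Real.lt_sqrt h0.le).1 h1
      exact ⟨by positivity, (div_lt_one hR).2 h2⟩
    · rintro ⟨h0, h1⟩
      refine ⟨√(u * R), ⟨Real.sqrt_pos.2 (by positivity), ?_⟩, ?_⟩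
      · exact Real.sqrt_lt_sqrt (by positivity) (by nlinarith)
      · simp only
        rw [Real.sq_sqrt (by positivity)]
        field_simp
  have hinj : Set.InjOn (fun z : ℝ => z ^ 2 / R) (Set.Ioo (0 : ℝ) (√R)) := by
    intro x hx y hy hxy
    have h1 : x ^ 2 = y ^ 2 := by
      simp only at hxy
      field_simp at hxy
      exact hxy
    exact (pow_left_inj₀ hx.1.le hy.1.le two_ne_zero).1 h1
  have hd : ∀ x ∈ Set.Ioo (0 : ℝ) (√R), HasDerivWithinAt (fun z : ℝ => z ^ 2 / R)
      (2 * x / R) (Set.Ioo (0 : ℝ) (√R)) x := by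
    intro x _
    have := ((hasDerivAt_pow 2 x).div_const R).hasDerivWithinAt (s := Set.Ioo (0 : ℝ) (√R))
    simpa using this
  have h := lintegral_image_eq_lintegral_abs_deriv_mul measurableSet_Ioo hd hinj
    (fun u => ENNReal.ofReal (u ^ (((k : ℝ) + 1 / 2) - 1) * (1 - u) ^ (q - 1)))
  rw [hs, wpm_beta _ _ (by positivity) hq] at h
  rw [ENNReal.ofReal_mul (by positivity), h, ← lintegral_const_mul]
  · refine setLIntegral_congr_fun measurableSet_Ioo fun z hz => ?_
    have hz0 : 0 < z := hz.1
    have h2 : 0 < R - z ^ 2 := sub_pos.2 ((Real.lt_sqrt hz0.le).1 hz.2)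
    have h3 : 1 - z ^ 2 / R = (R - z ^ 2) / R := by field_simp
    rw [← ENNReal.ofReal_mul (by positivity), ← ENNReal.ofReal_mul (by positivity)]
    congr 1
    rw [abs_of_pos (by positivity), h3, Real.div_rpow (by positivity) hR.le,
      Real.div_rpow h2.le hR.le]
    have e1 : (z ^ 2) ^ ((k : ℝ) + 1 / 2 - 1) * z = z ^ (2 * k) := by
      rw [← Real.rpow_natCast z 2, ← Real.rpow_mul hz0.le, ← Real.rpow_add_one hz0.ne',
        ← Real.rpow_natCast]
      congr 1
      push_cast
      ring
    have e2 : R ^ ((k : ℝ) + q - 1 / 2) =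
        R * (R ^ ((k : ℝ) + 1 / 2 - 1) * R ^ (q - 1)) := by
      rw [← Real.rpow_add hR, mul_comm, ← Real.rpow_add_one hR.ne']
      congr 1
      ring
    rw [e2, ← e1]
    have := (Real.rpow_pos_of_pos hR ((k : ℝ) + 1 / 2 - 1)).ne'
    have := (Real.rpow_pos_of_pos hR (q - 1)).ne'
    field_simp
  · fun_prop

lemma wpm_fold (f : ℝ → ENNReal) (hf : Measurable f) :
    ∫⁻ z, f z = ∫⁻ z in Set.Ioi (0 : ℝ), (f z + f (-z)) := by
  rw [← lintegral_add_compl f (measurableSet_Ioi (a := (0 : ℝ))), lintegral_add_left hf]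
  congr 1
  rw [Set.compl_Ioi]
  have h := (Measure.measurePreserving_neg (volume : Measure ℝ)).setLIntegral_comp_preimage
    (measurableSet_Iic (a := (0 : ℝ))) hf
  rw [← h, setLIntegral_congr (Ioi_ae_eq_Ici (a := (0 : ℝ)))]
  congr 2
  ext; simp

lemma wpm_inner (q R c : ℝ) (hq : 0 < q) (hR : 0 < R) :
    ∫⁻ z, {z : ℝ | 0 < R - z ^ 2}.indicator
        (fun z => ENNReal.ofReal ((R - z ^ 2) ^ (q - 1) * Real.exp (-(2 * c * z)))) z =
      ∑' k : ℕ, ENNReal.ofReal ((2 * c) ^ (2 * k) / ((2 * k).factorial : ℝ) *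
        (R ^ ((k : ℝ) + q - 1 / 2) *
          (Real.Gamma (k + 1 / 2) * Real.Gamma q / Real.Gamma (k + 1 / 2 + q)))) := by
  have hm : MeasurableSet {z : ℝ | 0 < R - z ^ 2} :=
    measurableSet_lt measurable_const (by fun_prop)
  rw [wpm_fold _ (Measurable.indicator (by fun_prop) hm)]
  have h1 : ∀ z ∈ Set.Ioi (0 : ℝ), ({z : ℝ | 0 < R - z ^ 2}.indicator
        (fun z => ENNReal.ofReal ((R - z ^ 2) ^ (q - 1) * Real.exp (-(2 * c * z)))) z +
      {z : ℝ | 0 < R - z ^ 2}.indicator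
        (fun z => ENNReal.ofReal ((R - z ^ 2) ^ (q - 1) * Real.exp (-(2 * c * z)))) (-z)) =
      (Set.Ioo 0 (√R)).indicator (fun z => ∑' k : ℕ,
        ENNReal.ofReal ((2 * c) ^ (2 * k) / ((2 * k).factorial : ℝ)) *
        ENNReal.ofReal (2 * z ^ (2 * k) * (R - z ^ 2) ^ (q - 1))) z := by
    intro z hz
    have hz0 : 0 < z := hz
    by_cases hzR : 0 < R - z ^ 2
    · have m1 : z ∈ {z : ℝ | 0 < R - z ^ 2} := hzR
      have m2 : -z ∈ {z : ℝ | 0 < R - z ^ 2} := by simpa using hzR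
      have m3 : z ∈ Set.Ioo 0 (√R) := ⟨hz0, (Real.lt_sqrt hz0.le).2 (by linarith)⟩
      rw [Set.indicator_of_mem m1, Set.indicator_of_mem m2, Set.indicator_of_mem m3]
      rw [← ENNReal.ofReal_add (by positivity) (by rw [neg_sq]; positivity)]
      have hc := (Real.hasSum_cosh (2 * c * z)).mul_left (2 * (R - z ^ 2) ^ (q - 1))
      have e1 : (R - z ^ 2) ^ (q - 1) * Real.exp (-(2 * c * z)) +
          (R - (-z) ^ 2) ^ (q - 1) * Real.exp (-(2 * c * -z)) =
          2 * (R - z ^ 2) ^ (q - 1) * Real.cosh (2 * c * z) := by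
        rw [Real.cosh_eq, neg_sq]
        ring_nf
      have hev : ∀ (k : ℕ) (t : ℝ), 0 ≤ t ^ (2 * k) := fun k t => by
        rw [pow_mul]; positivity
      rw [e1, ← hc.tsum_eq, ENNReal.ofReal_tsum_of_nonneg _ hc.summable]
      · congr 1
        ext k
        rw [← ENNReal.ofReal_mul (div_nonneg (hev _ _) (by positivity))]
        congr 1
        rw [mul_pow (2 * c) z]
        ring
      · intro k
        have := hev k (2 * c * z)
        positivity
    · have m1 : z ∉ {z : ℝ | 0 < R - z ^ 2} := hzR
      have m2 : -z ∉ {z : ℝ | 0 < R - z ^ 2} := by simpa using hzR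
      have m3 : z ∉ Set.Ioo 0 (√R) := fun h => hzR (sub_pos.2 ((Real.lt_sqrt hz0.le).1 h.2))
      rw [Set.indicator_of_notMem m1, Set.indicator_of_notMem m2, Set.indicator_of_notMem m3,
        add_zero]
  rw [setLIntegral_congr_fun measurableSet_Ioi h1, setLIntegral_indicator measurableSet_Ioo]
  have h2 : Set.Ioo 0 (√R) ∩ Set.Ioi 0 = Set.Ioo 0 (√R) :=
    Set.inter_eq_left.2 fun x hx => hx.1
  rw [h2, lintegral_tsum (fun k => by fun_prop)]
  congr 1
  ext k
  rw [lintegral_const_mul _ (by fun_prop), wpm_half q R hq hR, ← ENNReal.ofReal_mul]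
  refine div_nonneg ?_ (by positivity)
  rw [pow_mul]; positivity

lemma wpm_gamma_half (k : ℕ) :
    Real.Gamma (k + 1 / 2) * (4 ^ k * (k.factorial : ℝ)) = ((2 * k).factorial : ℝ) * √π := by
  induction k with
  | zero => simp [-one_div, Real.Gamma_one_half_eq]
  | succ k ih =>
    have e : ((k + 1 : ℕ) : ℝ) + 1 / 2 = ((k : ℝ) + 1 / 2) + 1 := by push_cast; ring
    rw [e, Real.Gamma_add_one (by positivity), show 2 * (k + 1) = (2 * k + 1) + 1 by ring,
      Nat.factorial_succ, Nat.factorial_succ, Nat.factorial_succ]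
    push_cast
    linear_combination (2 * (k : ℝ) + 1) * (2 * (k : ℝ) + 2) * ih

lemma wpm_gamma_add (x : ℝ) (hx : 0 < x) (k : ℕ) :
    Real.Gamma (x + k) = (ascPochhammer ℝ k).eval x * Real.Gamma x := by
  induction k with
  | zero => simp
  | succ k ih =>
    push_cast
    rw [← add_assoc, Real.Gamma_add_one (by positivity), ih, ascPochhammer_succ_eval]
    ring

lemma wpm_measurableSet : MeasurableSet
    {q : ℝ × ℝ × ℝ | 0 < q.1 ∧ 0 < q.2.1 ∧ 0 < q.1 * q.2.1 - q.2.2 ^ 2} := by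
  have h1 : MeasurableSet {q : ℝ × ℝ × ℝ | 0 < q.1} :=
    measurableSet_lt measurable_const (by fun_prop)
  have h2 : MeasurableSet {q : ℝ × ℝ × ℝ | 0 < q.2.1} :=
    measurableSet_lt measurable_const (by fun_prop)
  have h3 : MeasurableSet {q : ℝ × ℝ × ℝ | 0 < q.1 * q.2.1 - q.2.2 ^ 2} :=
    measurableSet_lt measurable_const (by fun_prop)
  exact h1.inter (h2.inter h3)

lemma wpm_lintegral (α a b c ν₁ ν₂ : ℝ)
    (hα : 1 < α) (ha : 0 < a) (hb : 0 < b)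
    (hν₁ : -α / 2 < ν₁) (hν₂ : -α / 2 < ν₂) :
    (∫⁻ p in {q : ℝ × ℝ × ℝ | 0 < q.1 ∧ 0 < q.2.1 ∧ 0 < q.1 * q.2.1 - q.2.2 ^ 2},
        ENNReal.ofReal (p.1 ^ ν₁ * p.2.1 ^ ν₂ * (p.1 * p.2.1 - p.2.2 ^ 2) ^ ((α - 3) / 2) *
          Real.exp (-(a * p.1 + b * p.2.1 + 2 * c * p.2.2)))) =
      ∑' k : ℕ, ENNReal.ofReal ((2 * c) ^ (2 * k) / ((2 * k).factorial : ℝ) *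
          (Real.Gamma (k + 1 / 2) * Real.Gamma ((α - 1) / 2) /
            Real.Gamma (k + 1 / 2 + (α - 1) / 2))) *
        (ENNReal.ofReal ((1 / a) ^ (α / 2 + ν₁ + k) * Real.Gamma (α / 2 + ν₁ + k)) *
         ENNReal.ofReal ((1 / b) ^ (α / 2 + ν₂ + k) * Real.Gamma (α / 2 + ν₂ + k))) := by
  have hD := wpm_measurableSet
  have hq : 0 < (α - 1) / 2 := by linarith
  have hev : ∀ (k : ℕ) (t : ℝ), 0 ≤ t ^ (2 * k) := fun k t => by
    rw [pow_mul]; positivity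
  rw [← lintegral_indicator hD, Measure.volume_eq_prod, lintegral_prod]
  swap
  · exact (Measurable.indicator (by fun_prop) hD).aemeasurable
  have hx : ∀ x : ℝ, (∫⁻ p : ℝ × ℝ,
      {q : ℝ × ℝ × ℝ | 0 < q.1 ∧ 0 < q.2.1 ∧ 0 < q.1 * q.2.1 - q.2.2 ^ 2}.indicator
        (fun p => ENNReal.ofReal (p.1 ^ ν₁ * p.2.1 ^ ν₂ *
          (p.1 * p.2.1 - p.2.2 ^ 2) ^ ((α - 3) / 2) *
          Real.exp (-(a * p.1 + b * p.2.1 + 2 * c * p.2.2)))) (x, p)) =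
      ∫⁻ y : ℝ, ∑' k : ℕ, ENNReal.ofReal ((2 * c) ^ (2 * k) / ((2 * k).factorial : ℝ) *
          (Real.Gamma (k + 1 / 2) * Real.Gamma ((α - 1) / 2) /
            Real.Gamma (k + 1 / 2 + (α - 1) / 2))) *
        ((Set.Ioi (0 : ℝ)).indicator (fun x =>
            ENNReal.ofReal (x ^ (α / 2 + ν₁ + k - 1) * Real.exp (-(a * x)))) x *
         (Set.Ioi (0 : ℝ)).indicator (fun y =>
            ENNReal.ofReal (y ^ (α / 2 + ν₂ + k - 1) * Real.exp (-(b * y)))) y) := by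
    intro x
    rw [Measure.volume_eq_prod, lintegral_prod]
    swap
    · exact ((Measurable.indicator (by fun_prop) hD).comp measurable_prodMk_left).aemeasurable
    refine lintegral_congr fun y => ?_
    by_cases hxy : 0 < x ∧ 0 < y
    · obtain ⟨hx, hy⟩ := hxy
      have hR : 0 < x * y := mul_pos hx hy
      have h1 : ∀ z : ℝ,
          {q : ℝ × ℝ × ℝ | 0 < q.1 ∧ 0 < q.2.1 ∧ 0 < q.1 * q.2.1 - q.2.2 ^ 2}.indicator
          (fun p => ENNReal.ofReal (p.1 ^ ν₁ * p.2.1 ^ ν₂ *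
            (p.1 * p.2.1 - p.2.2 ^ 2) ^ ((α - 3) / 2) *
            Real.exp (-(a * p.1 + b * p.2.1 + 2 * c * p.2.2)))) (x, y, z) =
          ENNReal.ofReal (x ^ ν₁ * y ^ ν₂ * (Real.exp (-(a * x)) * Real.exp (-(b * y)))) *
          {z : ℝ | 0 < x * y - z ^ 2}.indicator
            (fun z => ENNReal.ofReal ((x * y - z ^ 2) ^ ((α - 1) / 2 - 1) *
              Real.exp (-(2 * c * z)))) z := by
        intro z
        by_cases hz : 0 < x * y - z ^ 2
        · rw [Set.indicator_of_mem (show (x, y, z) ∈ {q : ℝ × ℝ × ℝ | 0 < q.1 ∧ 0 < q.2.1 ∧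
              0 < q.1 * q.2.1 - q.2.2 ^ 2} from ⟨hx, hy, hz⟩),
            Set.indicator_of_mem (show z ∈ {z : ℝ | 0 < x * y - z ^ 2} from hz),
            ← ENNReal.ofReal_mul (by positivity)]
          congr 1
          have e1 : Real.exp (-(a * x + b * y + 2 * c * z)) =
              Real.exp (-(a * x)) * Real.exp (-(b * y)) * Real.exp (-(2 * c * z)) := by
            rw [← Real.exp_add, ← Real.exp_add]
            congr 1
            ring
          have e2 : (α - 3) / 2 = (α - 1) / 2 - 1 := by ring
          simp only
          rw [e1, e2]
          ring
        · rw [Set.indicator_of_notMem (fun h => hz h.2.2),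
            Set.indicator_of_notMem (show z ∉ {z : ℝ | 0 < x * y - z ^ 2} from hz), mul_zero]
      simp_rw [h1]
      rw [lintegral_const_mul, wpm_inner _ _ _ hq hR, ← ENNReal.tsum_mul_left]
      · congr 1
        ext k
        rw [Set.indicator_of_mem (show x ∈ Set.Ioi 0 from hx),
          Set.indicator_of_mem (show y ∈ Set.Ioi 0 from hy),
          ← ENNReal.ofReal_mul (by positivity), ← ENNReal.ofReal_mul (by positivity),
          ← ENNReal.ofReal_mul]
        · congr 1
          have e3 : (k : ℝ) + (α - 1) / 2 - 1 / 2 = α / 2 + k - 1 := by ring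
          have e4 : x ^ (α / 2 + ν₁ + k - 1) = x ^ ν₁ * x ^ (α / 2 + k - 1) := by
            rw [← Real.rpow_add hx]; congr 1; ring
          have e5 : y ^ (α / 2 + ν₂ + k - 1) = y ^ ν₂ * y ^ (α / 2 + k - 1) := by
            rw [← Real.rpow_add hy]; congr 1; ring
          rw [e3, e4, e5, Real.mul_rpow hx.le hy.le]
          ring
        · have h2 := hev k (2 * c)
          have h3 := Real.Gamma_pos_of_pos hq
          have h4 : 0 < Real.Gamma ((k : ℝ) + 1 / 2) := Real.Gamma_pos_of_pos (by positivity)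
          have h5 : 0 < Real.Gamma ((k : ℝ) + 1 / 2 + (α - 1) / 2) :=
            Real.Gamma_pos_of_pos (by positivity)
          positivity
      · exact Measurable.indicator (by fun_prop)
          (measurableSet_lt measurable_const (by fun_prop))
    · have h1 : ∀ z : ℝ,
          {q : ℝ × ℝ × ℝ | 0 < q.1 ∧ 0 < q.2.1 ∧ 0 < q.1 * q.2.1 - q.2.2 ^ 2}.indicator
          (fun p => ENNReal.ofReal (p.1 ^ ν₁ * p.2.1 ^ ν₂ *
            (p.1 * p.2.1 - p.2.2 ^ 2) ^ ((α - 3) / 2) *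
            Real.exp (-(a * p.1 + b * p.2.1 + 2 * c * p.2.2)))) (x, y, z) = 0 := by
        intro z
        exact Set.indicator_of_notMem (fun h => hxy ⟨h.1, h.2.1⟩) _
      simp_rw [h1]
      rw [lintegral_zero, eq_comm, ENNReal.tsum_eq_zero]
      intro k
      rcases not_and_or.1 hxy with h | h
      · rw [Set.indicator_of_notMem (show x ∉ Set.Ioi 0 from h)]
        simp
      · rw [Set.indicator_of_notMem (show y ∉ Set.Ioi 0 from h)]
        simp
  have hm : ∀ s r : ℝ, Measurable ((Set.Ioi (0 : ℝ)).indicator (fun x =>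
            ENNReal.ofReal (x ^ s * Real.exp (-(r * x))))) := fun s r =>
    Measurable.indicator (by fun_prop) measurableSet_Ioi
  simp_rw [hx]
  have hy : ∀ x : ℝ, (∫⁻ y : ℝ, ∑' k : ℕ,
      ENNReal.ofReal ((2 * c) ^ (2 * k) / ((2 * k).factorial : ℝ) *
          (Real.Gamma (k + 1 / 2) * Real.Gamma ((α - 1) / 2) /
            Real.Gamma (k + 1 / 2 + (α - 1) / 2))) *
        ((Set.Ioi (0 : ℝ)).indicator (fun x =>
            ENNReal.ofReal (x ^ (α / 2 + ν₁ + k - 1) * Real.exp (-(a * x)))) x *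
         (Set.Ioi (0 : ℝ)).indicator (fun y =>
            ENNReal.ofReal (y ^ (α / 2 + ν₂ + k - 1) * Real.exp (-(b * y)))) y)) =
      ∑' k : ℕ, ENNReal.ofReal ((2 * c) ^ (2 * k) / ((2 * k).factorial : ℝ) *
          (Real.Gamma (k + 1 / 2) * Real.Gamma ((α - 1) / 2) /
            Real.Gamma (k + 1 / 2 + (α - 1) / 2))) *
        ((Set.Ioi (0 : ℝ)).indicator (fun x =>
            ENNReal.ofReal (x ^ (α / 2 + ν₁ + k - 1) * Real.exp (-(a * x)))) x *
         ENNReal.ofReal ((1 / b) ^ (α / 2 + ν₂ + k) * Real.Gamma (α / 2 + ν₂ + k))) := by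
    intro x
    rw [lintegral_tsum]
    · congr 1
      ext k
      have hk : (0 : ℝ) ≤ k := by positivity
      rw [lintegral_const_mul _ ((hm _ _).const_mul _), lintegral_const_mul _ (hm _ _),
        lintegral_indicator measurableSet_Ioi, wpm_gamma _ _ (by linarith) hb]
    · intro k
      exact (((hm _ _).const_mul _).const_mul _).aemeasurable
  simp_rw [hy]
  rw [lintegral_tsum]
  · congr 1
    ext k
    have hk : (0 : ℝ) ≤ k := by positivity
    rw [lintegral_const_mul _ ((hm _ _).mul_const _), lintegral_mul_const _ (hm _ _),
        lintegral_indicator measurableSet_Ioi, wpm_gamma _ _ (by linarith) ha]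
  · intro k
    exact (((hm _ _).mul_const _).const_mul _).aemeasurable

lemma wpm_alg (F C f fk sp gq P gα X A PA gA Y B PB gB : ℝ) (hF : F ≠ 0) (hf : f ≠ 0)
    (hfk : fk ≠ 0) (hA : A ≠ 0) (hB : B ≠ 0) (hP : P ≠ 0) (hg : gα ≠ 0) :
    F * C / f * (f * sp / (F * fk) * gq / (P * gα)) *
      (X * (1 / A) * (PA * gA) * (Y * (1 / B) * (PB * gB))) =
    sp * gq * (gA * gB / gα) * (X * Y) * (PA * PB / (P * fk) * (C / (A * B))) := by
  field_simp

/-- Explicit Wishart moment formula for the product of the two diagonal entries of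
a bivariate (`2×2`) Wishart random matrix, expressed as a Lebesgue integral over
`D = {(x,y,z) : x > 0, y > 0, xy − z² > 0}`:
`∫_D x^{ν₁} y^{ν₂} (xy−z²)^{(α−3)/2} e^{−(ax+by+2cz)}`
`= √π Γ((α−1)/2) (Γ(α/2+ν₁)Γ(α/2+ν₂)/Γ(α/2)) b^{ν₁} a^{ν₂} (ab−c²)^{−(α/2+ν₁+ν₂)}`
`· ₂F₁(−ν₁, −ν₂; α/2; c²/(ab))`. -/
theorem wishart_product_moment_2x2 (α a b c ν₁ ν₂ : ℝ)
    (hα : 1 < α) (ha : 0 < a) (hdet : 0 < a * b - c ^ 2)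
    (hν₁ : -α / 2 < ν₁) (hν₂ : -α / 2 < ν₂) :
    (∫ p in {q : ℝ × ℝ × ℝ | 0 < q.1 ∧ 0 < q.2.1 ∧ 0 < q.1 * q.2.1 - q.2.2 ^ 2},
        p.1 ^ ν₁ * p.2.1 ^ ν₂ * (p.1 * p.2.1 - p.2.2 ^ 2) ^ ((α - 3) / 2) *
          Real.exp (-(a * p.1 + b * p.2.1 + 2 * c * p.2.2))) =
      Real.sqrt π * Real.Gamma ((α - 1) / 2) *
        (Real.Gamma (α / 2 + ν₁) * Real.Gamma (α / 2 + ν₂) / Real.Gamma (α / 2)) *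
        b ^ ν₁ * a ^ ν₂ * (a * b - c ^ 2) ^ (-(α / 2 + ν₁ + ν₂)) *
        ∑' k : ℕ, (ascPochhammer ℝ k).eval (-ν₁) * (ascPochhammer ℝ k).eval (-ν₂) /
            ((ascPochhammer ℝ k).eval (α / 2) * (k.factorial : ℝ)) *
          (c ^ 2 / (a * b)) ^ k := by
  have hb : 0 < b := by nlinarith [sq_nonneg c]
  have hD := wpm_measurableSet
  have hα2 : 0 < α / 2 := by linarith
  have hq : 0 < (α - 1) / 2 := by linarith
  have hA : 0 < α / 2 + ν₁ := by linarith
  have hB : 0 < α / 2 + ν₂ := by linarith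
  have gq := Real.Gamma_pos_of_pos hq
  have gA := Real.Gamma_pos_of_pos hA
  have gB := Real.Gamma_pos_of_pos hB
  have gα := Real.Gamma_pos_of_pos hα2
  have hab : 0 < a * b := mul_pos ha hb
  have hw0 : 0 ≤ c ^ 2 / (a * b) := by positivity
  have hw1 : c ^ 2 / (a * b) < 1 := (div_lt_one hab).2 (by linarith)
  have hw : |c ^ 2 / (a * b)| < 1 := by rwa [abs_of_nonneg hw0]
  have hsum := (wpmT_summable (α / 2 + ν₁) (α / 2 + ν₂) (α / 2) _ hα2 hw).of_norm
  have hTpos : ∀ k, 0 ≤ wpmT (α / 2 + ν₁) (α / 2 + ν₂) (α / 2) k := fun k => by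
    have h1 := ascPochhammer_pos k _ hA
    have h2 := ascPochhammer_pos k _ hB
    have h3 := ascPochhammer_pos k _ hα2
    unfold wpmT
    positivity
  set K : ℝ := √π * Real.Gamma ((α - 1) / 2) *
    (Real.Gamma (α / 2 + ν₁) * Real.Gamma (α / 2 + ν₂) / Real.Gamma (α / 2)) *
    ((1 / a) ^ (α / 2 + ν₁) * (1 / b) ^ (α / 2 + ν₂)) with hK
  have hKpos : 0 ≤ K := by positivity
  have hterm : ∀ k : ℕ, ENNReal.ofReal ((2 * c) ^ (2 * k) / ((2 * k).factorial : ℝ) *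
          (Real.Gamma (k + 1 / 2) * Real.Gamma ((α - 1) / 2) /
            Real.Gamma (k + 1 / 2 + (α - 1) / 2))) *
        (ENNReal.ofReal ((1 / a) ^ (α / 2 + ν₁ + k) * Real.Gamma (α / 2 + ν₁ + k)) *
         ENNReal.ofReal ((1 / b) ^ (α / 2 + ν₂ + k) * Real.Gamma (α / 2 + ν₂ + k))) =
      ENNReal.ofReal (K * (wpmT (α / 2 + ν₁) (α / 2 + ν₂) (α / 2) k * (c ^ 2 / (a * b)) ^ k)) := by
    intro k
    have hk : (0 : ℝ) ≤ k := by positivity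
    have g1 : 0 < Real.Gamma (α / 2 + ν₁ + k) := Real.Gamma_pos_of_pos (by linarith)
    have g2 : 0 < Real.Gamma ((k : ℝ) + 1 / 2) := Real.Gamma_pos_of_pos (by linarith)
    have g3 : 0 < Real.Gamma ((k : ℝ) + 1 / 2 + (α - 1) / 2) :=
      Real.Gamma_pos_of_pos (by linarith)
    have hev : 0 ≤ (2 * c) ^ (2 * k) := by rw [pow_mul]; positivity
    rw [← ENNReal.ofReal_mul (by positivity), ← ENNReal.ofReal_mul (by positivity)]
    congr 1
    have e1 : (k : ℝ) + 1 / 2 + (α - 1) / 2 = α / 2 + k := by ring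
    have e2 : Real.Gamma ((k : ℝ) + 1 / 2) =
        ((2 * k).factorial : ℝ) * √π / (4 ^ k * (k.factorial : ℝ)) := by
      rw [eq_div_iff (by positivity)]
      exact wpm_gamma_half k
    have e3 : (2 * c) ^ (2 * k) = 4 ^ k * (c ^ 2) ^ k := by
      rw [pow_mul, mul_pow, mul_pow]; norm_num
    have h3 := ascPochhammer_pos k _ hα2
    rw [e1, e2, e3, wpm_gamma_add _ hα2, wpm_gamma_add _ hA, wpm_gamma_add _ hB,
      Real.rpow_add (one_div_pos.2 ha) (α / 2 + ν₁) k,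
      Real.rpow_add (one_div_pos.2 hb) (α / 2 + ν₂) k, Real.rpow_natCast,
      Real.rpow_natCast, hK, wpmT, one_div_pow, one_div_pow,
      div_pow (c ^ 2), mul_pow a b]
    generalize (1 / a) ^ (α / 2 + ν₁) = X
    generalize (1 / b) ^ (α / 2 + ν₂) = Y
    exact wpm_alg _ _ _ _ _ _ _ _ _ _ _ _ _ _ _ _ (by positivity) (by positivity)
      (by positivity) (by positivity) (by positivity) h3.ne' gα.ne'
  rw [integral_eq_lintegral_of_nonneg_ae]
  rotate_left
  · refine ae_restrict_of_forall_mem hD fun p hp => ?_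
    obtain ⟨h1, h2, h3⟩ := hp
    simp only [Pi.zero_apply]
    positivity
  · exact Measurable.aestronglyMeasurable (by fun_prop)
  rw [wpm_lintegral α a b c ν₁ ν₂ hα ha hb hν₁ hν₂]
  simp_rw [hterm]
  rw [← ENNReal.ofReal_tsum_of_nonneg (fun k => by have := hTpos k; positivity)
    (hsum.mul_left K), ENNReal.toReal_ofReal
    (tsum_nonneg (fun k => by have := hTpos k; positivity)), tsum_mul_left]
  have hE := wpm_euler (-ν₁) (-ν₂) (α / 2) _ hα2 hw
  rw [sub_neg_eq_add, sub_neg_eq_add, sub_neg_eq_add] at hE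
  rw [hE]
  change _ = _ * ∑' k : ℕ, wpmT (-ν₁) (-ν₂) (α / 2) k * (c ^ 2 / (a * b)) ^ k
  rw [← mul_assoc]
  congr 1
  have e1 : 1 - c ^ 2 / (a * b) = (a * b - c ^ 2) / (a * b) := by field_simp
  have e2 : ((a * b : ℝ)) ^ (-(α / 2 + ν₁ + ν₂)) =
      a ^ (-(α / 2 + ν₁)) * b ^ (-(α / 2 + ν₂)) * (a ^ (-ν₂) * b ^ (-ν₁)) := by
    rw [Real.mul_rpow ha.le hb.le,
      show -(α / 2 + ν₁ + ν₂) = -(α / 2 + ν₁) + -ν₂ by ring, Real.rpow_add ha,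
      show -(α / 2 + ν₁) + -ν₂ = -(α / 2 + ν₂) + -ν₁ by ring, Real.rpow_add hb]
    ring
  rw [hK, e1, Real.div_rpow hdet.le hab.le, e2, one_div, one_div, Real.inv_rpow ha.le,
    Real.inv_rpow hb.le, Real.rpow_neg ha.le, Real.rpow_neg hb.le, Real.rpow_neg ha.le,
    Real.rpow_neg hb.le]
  have := Real.rpow_pos_of_pos ha (α / 2 + ν₁)
  have := Real.rpow_pos_of_pos hb (α / 2 + ν₂)
  have := Real.rpow_pos_of_pos ha ν₂
  have := Real.rpow_pos_of_pos hb ν₁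
  field_simp
end

section
/- Let α > 1, and let a, b, c be real numbers with a > 0 and ab − c² > 0. Then for every real ν > −α/2, the Lebesgue integral over D = {(x,y,z) ∈ ℝ³ : x > 0, y > 0, xy − z² > 0} satisfies ∫_D x^{ν} (xy − z²)^{(α−3)/2} exp(−(a x + b y + 2 c z)) d(x,y,z) = √π · Γ((α−1)/2) · Γ(α/2 + ν) · b^{ν} (ab − c²)^{−(α/2 + ν)}. (This is the p_i = 1 case of the formula E(|X_{ii}|^{ν}) = |2Σ_{ii}|^{ν} Γ_{p_i}(α/2+ν)/Γ_{p_i}(α/2) for the expectation of a power of a principal minor of a Wishart random matrix.) -/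
open MeasureTheory Real

lemma aux_gamma (s r : ℝ) (hs : 0 < s) (hr : 0 < r) :
    ∫⁻ t in Set.Ioi (0:ℝ), ENNReal.ofReal (t ^ (s - 1) * Real.exp (-(r * t))) =
      ENNReal.ofReal ((1 / r) ^ s * Real.Gamma s) := by
  rw [← Real.integral_rpow_mul_exp_neg_mul_Ioi hs hr, ofReal_integral_eq_lintegral_ofReal]
  · have h := integrableOn_rpow_mul_exp_neg_mul_rpow (p := 1) (s := s - 1) (b := r)
      (by linarith) one_pos hr
    simpa [IntegrableOn] using h
  · filter_upwards [ae_restrict_mem measurableSet_Ioi] with t ht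
    have : (0:ℝ) < t := ht
    positivity

lemma aux_gauss (r : ℝ) (hr : 0 < r) :
    ∫⁻ t : ℝ, ENNReal.ofReal (Real.exp (-r * t ^ 2)) = ENNReal.ofReal (√(π / r)) := by
  rw [← integral_gaussian, ofReal_integral_eq_lintegral_ofReal (integrable_exp_neg_mul_sq hr)]
  exact Filter.Eventually.of_forall fun t => (Real.exp_pos _).le

/-- The `y`-integral. -/
lemma aux_y (α a b c ν x z : ℝ) (hα : 1 < α) (hb : 0 < b) (hx : 0 < x) :
    ∫⁻ y : ℝ, Set.indicator
        {q : ℝ × ℝ × ℝ | 0 < q.1 ∧ 0 < q.2.1 ∧ 0 < q.1 * q.2.1 - q.2.2 ^ 2}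
        (fun p => ENNReal.ofReal (p.1 ^ ν * (p.1 * p.2.1 - p.2.2 ^ 2) ^ ((α - 3) / 2) *
          Real.exp (-(a * p.1 + b * p.2.1 + 2 * c * p.2.2)))) (x, y, z) =
      ENNReal.ofReal (x ^ ν * x ^ ((α - 3) / 2) * Real.exp (-(a * x)) *
        ((1 / b) ^ ((α - 1) / 2) * Real.Gamma ((α - 1) / 2))) *
      ENNReal.ofReal (Real.exp (-(b * (z ^ 2 / x) + 2 * c * z))) := by
  rw [← lintegral_add_right_eq_self _ (z ^ 2 / x)]
  have key : ∀ u : ℝ, Set.indicator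
        {q : ℝ × ℝ × ℝ | 0 < q.1 ∧ 0 < q.2.1 ∧ 0 < q.1 * q.2.1 - q.2.2 ^ 2}
        (fun p => ENNReal.ofReal (p.1 ^ ν * (p.1 * p.2.1 - p.2.2 ^ 2) ^ ((α - 3) / 2) *
          Real.exp (-(a * p.1 + b * p.2.1 + 2 * c * p.2.2)))) (x, u + z ^ 2 / x, z) =
      Set.indicator (Set.Ioi (0:ℝ)) (fun u =>
        ENNReal.ofReal (x ^ ν * x ^ ((α - 3) / 2) * Real.exp (-(a * x)) *
          Real.exp (-(b * (z ^ 2 / x) + 2 * c * z))) *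
        ENNReal.ofReal (u ^ ((α - 1) / 2 - 1) * Real.exp (-(b * u)))) u := by
    intro u
    have h1 : x * (u + z ^ 2 / x) - z ^ 2 = x * u := by field_simp; ring
    by_cases hu : 0 < u
    · rw [Set.indicator_of_mem, Set.indicator_of_mem (show u ∈ Set.Ioi 0 from hu),
        ← ENNReal.ofReal_mul (by positivity)]
      · simp only [h1]
        rw [Real.mul_rpow hx.le hu.le, show (α - 1) / 2 - 1 = (α - 3) / 2 by ring,
          show -(a * x + b * (u + z ^ 2 / x) + 2 * c * z) =
            -(a * x) + -(b * (z ^ 2 / x) + 2 * c * z) + -(b * u) by ring,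
          Real.exp_add, Real.exp_add]
        congr 1; ring
      · simp only [Set.mem_ofPred_eq, h1]
        exact ⟨hx, by positivity, by positivity⟩
    · rw [Set.indicator_of_notMem, Set.indicator_of_notMem (show u ∉ Set.Ioi 0 from hu)]
      simp only [Set.mem_ofPred_eq, h1]
      rintro ⟨_, _, h⟩
      exact hu (pos_of_mul_pos_right h hx.le)
  have hG := Real.Gamma_pos_of_pos (show 0 < (α - 1) / 2 by linarith)
  simp_rw [key]
  rw [lintegral_indicator measurableSet_Ioi, lintegral_const_mul' _ _ ENNReal.ofReal_ne_top,
    aux_gamma _ _ (by linarith) hb, ← ENNReal.ofReal_mul (by positivity),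
    ← ENNReal.ofReal_mul (by positivity)]
  congr 1; ring

lemma aux_z (b c x : ℝ) (hb : 0 < b) (hx : 0 < x) :
    ∫⁻ z : ℝ, ENNReal.ofReal (Real.exp (-(b * (z ^ 2 / x) + 2 * c * z))) =
      ENNReal.ofReal (Real.exp (c ^ 2 / b * x) * √(π / (b / x))) := by
  rw [← lintegral_add_right_eq_self _ (-(c * x / b))]
  have key : ∀ w : ℝ, -(b * ((w + -(c * x / b)) ^ 2 / x) + 2 * c * (w + -(c * x / b))) =
      c ^ 2 / b * x + -(b / x) * w ^ 2 := by
    intro w; field_simp; ring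
  simp_rw [key, Real.exp_add, ENNReal.ofReal_mul (Real.exp_pos _).le]
  rw [lintegral_const_mul' _ _ ENNReal.ofReal_ne_top, aux_gauss _ (by positivity)]

/-- Moment of a single diagonal entry of a bivariate Wishart random matrix,
as a Lebesgue integral over `D = {(x,y,z) : x > 0, y > 0, xy − z² > 0}`:
`∫_D x^ν (xy−z²)^{(α−3)/2} e^{−(ax+by+2cz)} = √π Γ((α−1)/2) Γ(α/2+ν) b^ν (ab−c²)^{−(α/2+ν)}`. -/
theorem wishart_single_minor_moment_2x2 (α a b c ν : ℝ)
    (hα : 1 < α) (ha : 0 < a) (hdet : 0 < a * b - c ^ 2) (hν : -α / 2 < ν) :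
    (∫ p in {q : ℝ × ℝ × ℝ | 0 < q.1 ∧ 0 < q.2.1 ∧ 0 < q.1 * q.2.1 - q.2.2 ^ 2},
        p.1 ^ ν * (p.1 * p.2.1 - p.2.2 ^ 2) ^ ((α - 3) / 2) *
          Real.exp (-(a * p.1 + b * p.2.1 + 2 * c * p.2.2))) =
      Real.sqrt π * Real.Gamma ((α - 1) / 2) * Real.Gamma (α / 2 + ν) *
        b ^ ν * (a * b - c ^ 2) ^ (-(α / 2 + ν)) := by
  have hb : 0 < b := by
    by_contra h
    nlinarith [sq_nonneg c]
  have hs : 0 < α / 2 + ν := by linarith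
  have hG := Real.Gamma_pos_of_pos (show 0 < (α - 1) / 2 by linarith)
  have hG2 := Real.Gamma_pos_of_pos hs
  have hr : 0 < (a * b - c ^ 2) / b := by positivity
  have hD : MeasurableSet
      {q : ℝ × ℝ × ℝ | 0 < q.1 ∧ 0 < q.2.1 ∧ 0 < q.1 * q.2.1 - q.2.2 ^ 2} := by
    have h1 : MeasurableSet {q : ℝ × ℝ × ℝ | 0 < q.1} :=
      measurableSet_lt (by fun_prop) (by fun_prop)
    have h2 : MeasurableSet {q : ℝ × ℝ × ℝ | 0 < q.2.1} :=
      measurableSet_lt (by fun_prop) (by fun_prop)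
    have h3 : MeasurableSet {q : ℝ × ℝ × ℝ | 0 < q.1 * q.2.1 - q.2.2 ^ 2} :=
      measurableSet_lt (by fun_prop) (by fun_prop)
    exact h1.inter (h2.inter h3)
  have hm : Measurable (fun p : ℝ × ℝ × ℝ =>
      p.1 ^ ν * (p.1 * p.2.1 - p.2.2 ^ 2) ^ ((α - 3) / 2) *
          Real.exp (-(a * p.1 + b * p.2.1 + 2 * c * p.2.2))) := by fun_prop
  have hmi := (hm.ennreal_ofReal).indicator hD
  rw [integral_eq_lintegral_of_nonneg_ae _ hm.aestronglyMeasurable]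
  swap
  · filter_upwards [ae_restrict_mem hD] with p hp
    obtain ⟨h1, h2, h3⟩ := hp
    simp only [Pi.zero_apply]
    positivity
  have hx : ∀ x : ℝ, ∫⁻ w : ℝ × ℝ, Set.indicator
        {q : ℝ × ℝ × ℝ | 0 < q.1 ∧ 0 < q.2.1 ∧ 0 < q.1 * q.2.1 - q.2.2 ^ 2}
        (fun p => ENNReal.ofReal (p.1 ^ ν * (p.1 * p.2.1 - p.2.2 ^ 2) ^ ((α - 3) / 2) *
          Real.exp (-(a * p.1 + b * p.2.1 + 2 * c * p.2.2)))) (x, w) =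
      Set.indicator (Set.Ioi (0:ℝ)) (fun x =>
        ENNReal.ofReal ((1 / b) ^ ((α - 1) / 2) * Real.Gamma ((α - 1) / 2) * √(π / b)) *
        ENNReal.ofReal (x ^ ((α / 2 + ν) - 1) *
          Real.exp (-((a * b - c ^ 2) / b * x)))) x := by
    intro x
    by_cases hx : 0 < x
    · have hmx := hmi.comp (measurable_prodMk_left (x := x))
      simp only [Function.comp_def] at hmx
      rw [Set.indicator_of_mem (show x ∈ Set.Ioi 0 from hx), Measure.volume_eq_prod,
        lintegral_prod_symm _ hmx.aemeasurable]
      simp_rw [aux_y α a b c ν x _ hα hb hx]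
      rw [lintegral_const_mul' _ _ ENNReal.ofReal_ne_top, aux_z b c x hb hx,
        ← ENNReal.ofReal_mul (by positivity), ← ENNReal.ofReal_mul (by positivity)]
      congr 1
      rw [show π / (b / x) = π / b * x by field_simp, Real.sqrt_mul (by positivity),
        Real.sqrt_eq_rpow x,
        show α / 2 + ν - 1 = ν + (α - 3) / 2 + 1 / 2 by ring, Real.rpow_add hx, Real.rpow_add hx,
        show -((a * b - c ^ 2) / b * x) = -(a * x) + c ^ 2 / b * x by field_simp; ring,
        Real.exp_add]
      ring
    · rw [Set.indicator_of_notMem (show x ∉ Set.Ioi 0 from hx)]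
      rw [← lintegral_zero (α := ℝ × ℝ) (μ := volume)]
      congr 1
      funext w
      rw [Set.indicator_of_notMem]
      rintro ⟨h, _⟩
      exact hx h
  rw [← lintegral_indicator hD, Measure.volume_eq_prod, lintegral_prod _ hmi.aemeasurable]
  simp_rw [hx]
  rw [lintegral_indicator measurableSet_Ioi, lintegral_const_mul' _ _ ENNReal.ofReal_ne_top,
    aux_gamma _ _ hs hr, ← ENNReal.ofReal_mul (by positivity),
    ENNReal.toReal_ofReal (by positivity)]
  have e1 : (1 / b) ^ ((α - 1) / 2) = b ^ (-((α - 1) / 2)) := by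
    rw [one_div, Real.inv_rpow hb.le, Real.rpow_neg hb.le]
  have e2 : (1 / ((a * b - c ^ 2) / b)) ^ (α / 2 + ν) =
      b ^ (α / 2 + ν) * (a * b - c ^ 2) ^ (-(α / 2 + ν)) := by
    rw [one_div_div, Real.div_rpow hb.le hdet.le, Real.rpow_neg hdet.le, div_eq_mul_inv]
  have e3 : √(π / b) = √π * b ^ (-(1 / 2) : ℝ) := by
    rw [Real.sqrt_div pi_pos.le, Real.sqrt_eq_rpow b, Real.rpow_neg hb.le, div_eq_mul_inv]
  have e4 : b ^ ν = b ^ (-((α - 1) / 2)) * b ^ (-(1 / 2) : ℝ) * b ^ (α / 2 + ν) := by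
    rw [← Real.rpow_add hb, ← Real.rpow_add hb]
    congr 1; ring
  rw [e1, e2, e3, e4]
  ring
end

section
/- Let α > 1, and let a, b, c be real numbers with a > 0 and ab − c² > 0. Then the Lebesgue integral over D = {(x,y,z) ∈ ℝ³ : x > 0, y > 0, xy − z² > 0} satisfies ∫_D (xy − z²)^{(α−3)/2} exp(−(a x + b y + 2 c z)) d(x,y,z) = √π · Γ(α/2) · Γ((α−1)/2) · (ab − c²)^{−α/2}. (This evaluates the normalizing constant of the bivariate Wishart density: the two-dimensional multivariate gamma function Γ₂(α/2) = √π Γ(α/2) Γ((α−1)/2) appears.) -/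
open MeasureTheory Real

/-- A nonnegative function with nonzero Bochner integral has that value as lower integral. -/
lemma wish_lint_of_int {X : Type*} [MeasurableSpace X] (μ : Measure X) (f : X → ℝ) (v : ℝ)
    (hv : 0 < v) (hf : 0 ≤ᵐ[μ] f) (h : ∫ x, f x ∂μ = v) :
    ∫⁻ x, ENNReal.ofReal (f x) ∂μ = ENNReal.ofReal v := by
  have hi : Integrable f μ := by
    by_contra hn
    rw [integral_undef hn] at h
    linarith
  rw [← ofReal_integral_eq_lintegral_ofReal hi hf, h]

lemma wish_gamma (s r C : ℝ) (hs : 0 < s) (hr : 0 < r) (hC : 0 < C) :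
    ∫⁻ t in Set.Ioi (0 : ℝ), ENNReal.ofReal (C * (t ^ (s - 1) * Real.exp (-(r * t)))) =
      ENNReal.ofReal (C * ((1 / r) ^ s * Real.Gamma s)) := by
  have hG := Real.Gamma_pos_of_pos hs
  apply wish_lint_of_int
  · positivity
  · filter_upwards [ae_restrict_mem measurableSet_Ioi] with t ht
    have : (0 : ℝ) < t := ht
    simp only [Pi.zero_apply]
    positivity
  · rw [integral_const_mul, Real.integral_rpow_mul_exp_neg_mul_Ioi hs hr]

lemma wish_gauss (r c C : ℝ) (hr : 0 < r) (hC : 0 < C) :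
    ∫⁻ z : ℝ, ENNReal.ofReal (C * Real.exp (-(r * z ^ 2 + 2 * c * z))) =
      ENNReal.ofReal (C * (Real.exp (c ^ 2 / r) * √(π / r))) := by
  apply wish_lint_of_int
  · positivity
  · filter_upwards with t
    simp only [Pi.zero_apply]
    positivity
  · rw [integral_const_mul, ← integral_gaussian r,
      ← integral_const_mul (Real.exp (c ^ 2 / r)) (fun x : ℝ => Real.exp (-r * x ^ 2)),
      ← integral_add_right_eq_self (fun z => Real.exp (c ^ 2 / r) * Real.exp (-r * z ^ 2)) (c / r)]
    congr 2
    ext z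
    rw [← Real.exp_add]
    congr 1
    field_simp
    ring

lemma wish_inner (k a b c x z : ℝ) (hk : -1 < k) (hb : 0 < b) (hx : 0 < x) :
    ∫⁻ y : ℝ, {q : ℝ × ℝ × ℝ | 0 < q.1 ∧ 0 < q.2.1 ∧ 0 < q.1 * q.2.1 - q.2.2 ^ 2}.indicator
      (fun p => ENNReal.ofReal ((p.1 * p.2.1 - p.2.2 ^ 2) ^ k *
          Real.exp (-(a * p.1 + b * p.2.1 + 2 * c * p.2.2)))) (x, y, z) =
    ENNReal.ofReal ((x ^ k * Real.exp (-(a * x)) * ((1 / b) ^ (k + 1) * Real.Gamma (k + 1))) *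
      Real.exp (-(b / x * z ^ 2 + 2 * c * z))) := by
  rw [← lintegral_add_right_eq_self _ (z ^ 2 / x)]
  have key := wish_gamma (k + 1) b
    (x ^ k * Real.exp (-(a * x)) * Real.exp (-(b / x * z ^ 2 + 2 * c * z)))
    (by linarith) hb (by positivity)
  rw [← lintegral_indicator measurableSet_Ioi] at key
  trans
  swap
  · refine key.trans ?_
    congr 1
    ring
  · congr 1
    ext t
    have e : x * (t + z ^ 2 / x) - z ^ 2 = x * t := by field_simp; ring
    by_cases ht : 0 < t
    · rw [Set.indicator_of_mem, Set.indicator_of_mem]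
      · simp only [e]
        rw [Real.mul_rpow hx.le ht.le, add_sub_cancel_right]
        congr 1
        have : Real.exp (-(a * x + b * (t + z ^ 2 / x) + 2 * c * z)) =
          Real.exp (-(a * x)) * Real.exp (-(b / x * z ^ 2 + 2 * c * z)) * Real.exp (-(b * t)) := by
          rw [← Real.exp_add, ← Real.exp_add]
          congr 1
          ring
        rw [this]
        ring
      · exact ht
      · refine ⟨hx, ?_, ?_⟩
        · show 0 < t + z ^ 2 / x
          positivity
        · simp only [e]
          positivity
    · rw [Set.indicator_of_notMem, Set.indicator_of_notMem]
      · exact ht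
      · rintro ⟨-, -, h⟩
        simp only [e] at h
        exact ht (pos_of_mul_pos_right h hx.le)

/-- Normalizing constant of the bivariate Wishart density, as a Lebesgue integral over
`D = {(x,y,z) : x > 0, y > 0, xy − z² > 0}`:
`∫_D (xy−z²)^{(α−3)/2} e^{−(ax+by+2cz)} = √π Γ(α/2) Γ((α−1)/2) (ab−c²)^{−α/2}`. -/
theorem wishart_normalizing_constant_2x2 (α a b c : ℝ)
    (hα : 1 < α) (ha : 0 < a) (hdet : 0 < a * b - c ^ 2) :
    (∫ p in {q : ℝ × ℝ × ℝ | 0 < q.1 ∧ 0 < q.2.1 ∧ 0 < q.1 * q.2.1 - q.2.2 ^ 2},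
        (p.1 * p.2.1 - p.2.2 ^ 2) ^ ((α - 3) / 2) *
          Real.exp (-(a * p.1 + b * p.2.1 + 2 * c * p.2.2))) =
      Real.sqrt π * Real.Gamma (α / 2) * Real.Gamma ((α - 1) / 2) *
        (a * b - c ^ 2) ^ (-α / 2) := by
  have hb : 0 < b := by
    have : 0 < a * b := by nlinarith [sq_nonneg c]
    exact pos_of_mul_pos_right this ha.le
  have hS : MeasurableSet {q : ℝ × ℝ × ℝ | 0 < q.1 ∧ 0 < q.2.1 ∧ 0 < q.1 * q.2.1 - q.2.2 ^ 2} := by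
    have h1 : Measurable (fun q : ℝ × ℝ × ℝ => q.1) := by fun_prop
    have h2 : Measurable (fun q : ℝ × ℝ × ℝ => q.2.1) := by fun_prop
    have h3 : Measurable (fun q : ℝ × ℝ × ℝ => q.1 * q.2.1 - q.2.2 ^ 2) := by fun_prop
    exact (measurableSet_lt measurable_const h1).inter
      ((measurableSet_lt measurable_const h2).inter (measurableSet_lt measurable_const h3))
  have hm : Measurable (fun p : ℝ × ℝ × ℝ => (p.1 * p.2.1 - p.2.2 ^ 2) ^ ((α - 3) / 2) *
          Real.exp (-(a * p.1 + b * p.2.1 + 2 * c * p.2.2))) := by fun_prop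
  have hG1 : 0 < Real.Gamma (α / 2) := Real.Gamma_pos_of_pos (by linarith)
  have hG2 : 0 < Real.Gamma ((α - 1) / 2) := Real.Gamma_pos_of_pos (by linarith)
  have hmF := (hm.ennreal_ofReal).indicator hS
  rw [integral_eq_lintegral_of_nonneg_ae ?_ hm.aestronglyMeasurable]
  swap
  · filter_upwards [ae_restrict_mem hS] with p hp
    have := hp.2.2
    simp only [Pi.zero_apply]
    positivity
  rw [← lintegral_indicator hS, Measure.volume_eq_prod, lintegral_prod _ hmF.aemeasurable]
  have hx : ∀ x : ℝ, ∫⁻ q : ℝ × ℝ, {q : ℝ × ℝ × ℝ | 0 < q.1 ∧ 0 < q.2.1 ∧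
        0 < q.1 * q.2.1 - q.2.2 ^ 2}.indicator
      (fun p => ENNReal.ofReal ((p.1 * p.2.1 - p.2.2 ^ 2) ^ ((α - 3) / 2) *
          Real.exp (-(a * p.1 + b * p.2.1 + 2 * c * p.2.2)))) (x, q) =
      (Set.Ioi (0 : ℝ)).indicator (fun x => ENNReal.ofReal
        (((1 / b) ^ ((α - 1) / 2) * Real.Gamma ((α - 1) / 2) * √(π / b)) *
          (x ^ (α / 2 - 1) * Real.exp (-((a - c ^ 2 / b) * x))))) x := by
    intro x
    by_cases h : 0 < x
    · rw [Set.indicator_of_mem (show x ∈ Set.Ioi (0 : ℝ) from h), Measure.volume_eq_prod]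
      refine (lintegral_prod_symm' _ (hmF.comp (measurable_prodMk_left (x := x)))).trans ?_
      simp only [Function.comp_apply]
      simp_rw [wish_inner ((α - 3) / 2) a b c x _ (by linarith) hb h]
      have e1 : (α - 3) / 2 + 1 = (α - 1) / 2 := by ring
      rw [e1, wish_gauss (b / x) c _ (by positivity) (by positivity)]
      congr 1
      have e2 : √(π / (b / x)) = √(π / b) * x ^ (1 / 2 : ℝ) := by
        rw [← Real.sqrt_eq_rpow, ← Real.sqrt_mul (by positivity)]
        congr 1
        field_simp
      have e3 : x ^ (α / 2 - 1) = x ^ ((α - 3) / 2) * x ^ (1 / 2 : ℝ) := by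
        rw [← Real.rpow_add h]
        congr 1
        ring
      have e4 : Real.exp (-((a - c ^ 2 / b) * x)) =
          Real.exp (-(a * x)) * Real.exp (c ^ 2 / (b / x)) := by
        rw [← Real.exp_add]
        congr 1
        field_simp
        ring
      rw [e2, e3, e4]
      ring
    · rw [Set.indicator_of_notMem (show x ∉ Set.Ioi (0 : ℝ) from h)]
      rw [← lintegral_zero (μ := (volume : Measure (ℝ × ℝ)))]
      congr 1
      ext q
      rw [Set.indicator_of_notMem]
      rintro ⟨hpos, -⟩
      exact h hpos
  simp_rw [hx]
  have hd : 0 < a - c ^ 2 / b := by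
    have : a - c ^ 2 / b = (a * b - c ^ 2) / b := by field_simp
    rw [this]
    positivity
  rw [lintegral_indicator measurableSet_Ioi, wish_gamma _ _ _ (by linarith) hd (by positivity),
    ENNReal.toReal_ofReal (by positivity)]
  have f1 : (1 / (a - c ^ 2 / b)) ^ (α / 2) = b ^ (α / 2) * (a * b - c ^ 2) ^ (-α / 2) := by
    have : 1 / (a - c ^ 2 / b) = b * (a * b - c ^ 2)⁻¹ := by field_simp
    rw [this, Real.mul_rpow hb.le (by positivity), Real.inv_rpow hdet.le, neg_div,
      Real.rpow_neg hdet.le]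
  have f2 : √(π / b) = √π * (1 / b) ^ (1 / 2 : ℝ) := by
    rw [← Real.sqrt_eq_rpow, ← Real.sqrt_mul (by positivity)]
    congr 1
    ring
  have f3 : (1 / b) ^ ((α - 1) / 2) * (1 / b) ^ (1 / 2 : ℝ) * b ^ (α / 2) = 1 := by
    have e : (α - 1) / 2 + 1 / 2 = α / 2 := by ring
    rw [← Real.rpow_add (by positivity), e, ← Real.mul_rpow (by positivity) hb.le,
      one_div_mul_cancel hb.ne', Real.one_rpow]
  rw [f1, f2]
  linear_combination (√π * Real.Gamma (α / 2) * Real.Gamma ((α - 1) / 2) *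
        (a * b - c ^ 2) ^ (-α / 2)) * f3
end

section
/- For every real numbers a, b ≥ 0, c > 0, natural number k ≥ 1, and with the ascending factorial notation, the term-splitting identity and bound hold: (c+a)_k (c+b)_k = ∏_{j=1}^k {(c+j−1)(c+j−1+a+b) + ab}, and consequently for every nonzero partition-type exponent this product is bounded below by (c)_k (c+a+b)_k + (ab)^k; equivalently, the ratio satisfies (c+a)_k (c+b)_k / (c)_k ≥ (c+a+b)_k + (ab)^k / (c)_k. -/
open Polynomial Finset

/-- Term-splitting identity and bound for ascending factorials: for `a, b ≥ 0`,
`c > 0` and `k ≥ 1`,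
`(c+a)_k (c+b)_k = ∏_{j=1}^k {(c+j−1)(c+j−1+a+b) + ab}`, and consequently
`(c+a)_k (c+b)_k / (c)_k ≥ (c+a+b)_k + (ab)^k / (c)_k`. -/
theorem ascFactorial_splitting_identity_and_bound (a b c : ℝ) (ha : 0 ≤ a)
    (hb : 0 ≤ b) (hc : 0 < c) (k : ℕ) (hk : 1 ≤ k) :
    (ascPochhammer ℝ k).eval (c + a) * (ascPochhammer ℝ k).eval (c + b) =
        (∏ j ∈ range k, ((c + (j : ℝ)) * (c + (j : ℝ) + a + b) + a * b)) ∧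
      (ascPochhammer ℝ k).eval (c + a) * (ascPochhammer ℝ k).eval (c + b) /
          (ascPochhammer ℝ k).eval c ≥
        (ascPochhammer ℝ k).eval (c + a + b) +
          (a * b) ^ k / (ascPochhammer ℝ k).eval c := by
  have key : (ascPochhammer ℝ k).eval (c + a) * (ascPochhammer ℝ k).eval (c + b) ≥
      (ascPochhammer ℝ k).eval c * (ascPochhammer ℝ k).eval (c + a + b) + (a * b) ^ k := by
    induction k, hk using Nat.le_induction with
    | base => simp; nlinarith
    | succ n hn ih =>
      have hC := ascPochhammer_pos n c hc
      have hS := ascPochhammer_pos n (c + a + b) (by positivity)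
      simp only [ascPochhammer_succ_eval]
      set C := (ascPochhammer ℝ n).eval c
      set S := (ascPochhammer ℝ n).eval (c + a + b)
      set A := (ascPochhammer ℝ n).eval (c + a)
      set B := (ascPochhammer ℝ n).eval (c + b)
      have hd : 0 ≤ a * b := mul_nonneg ha hb
      have hz : 0 ≤ (c + n) * (c + a + b + n) := by positivity
      calc A * (c + a + n) * (B * (c + b + n))
          = A * B * ((c + n) * (c + a + b + n) + a * b) := by ring
        _ ≥ (C * S + (a * b) ^ n) * ((c + n) * (c + a + b + n) + a * b) :=
            mul_le_mul_of_nonneg_right ih (by positivity)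
        _ = (C * (c + n) * (S * (c + a + b + n)) + (a * b) ^ (n + 1)) +
            (C * S * (a * b) + (a * b) ^ n * ((c + n) * (c + a + b + n))) := by ring
        _ ≥ _ := le_add_of_nonneg_right (by positivity)
  refine ⟨?_, ?_⟩
  · clear key hk
    induction k with
    | zero => simp
    | succ n ih =>
      rw [prod_range_succ, ← ih]
      simp only [ascPochhammer_succ_eval]
      ring
  · have hC := ascPochhammer_pos k c hc
    rw [ge_iff_le, le_div_iff₀ hC, add_mul, div_mul_cancel₀ _ hC.ne']
    linarith
end
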